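/- Let L be an even positive definite lattice of rank n, k ∈ ℤ, t ∈ ℚ with t > 0, D an even divisor of 24 with D < 24, Q = 24/D > 1, and let φ ∈ J_{k,L;t}(v_η^D × ν) be a holomorphic Jacobi form (ν trivial if Q is odd). Fix μ ∈ (ℤ/Qℤ)^* and choose σ_a ∈ SL₂(ℤ) with σ_a ≡ (a^{−1},0;0,a) mod Q for a coprime to Q. Write the Fourier expansion of φ as φ(τ,𝔷) = Σ_{ñ ≥ 0, ñ ≡ 1 mod Q, l ∈ (1/2)L^∨} f̃(ñ,l)·exp(2πi(ñτ/Q + (l,𝔷))). Then the lifting Lift_μ(φ)(τ,𝔷,ω) := Σ_{m ≥ 1, m ≡ μ mod Q} m^{−1} Σ_{ad=m, a>0} Σ_{b mod d} a^k v_η^D(σ_a) φ((aτ+bQ)/d, a𝔷) exp(2πi(m/Q)ω) has on H(L(Qt)) the Fourier expansion Lift_μ(φ)(τ,𝔷,ω) = Σ_{n,m ≥ 1, n ≡ m ≡ μ mod Q, l ∈ (1/2)L^∨} ( Σ_{a ≥ 1, a|n, a|m, l/a ∈ (1/2)L^∨} a^{k−1} v_η^D(σ_a) f̃(nm/a²,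 l/a) ) · exp(2πi(nτ/Q + (l,𝔷) + mω/Q)), where each coefficient vanishes unless 2nmt/Q − (l,l) ≥ 0. In particular Lift_μ(φ) is symmetric in the two modular variables: Lift_μ(φ)(τ,𝔷,ω) = Lift_μ(φ)(ω,𝔷,τ) for all (τ,𝔷,ω) ∈ H(L(Qt)). -/

import Mathlib

open Complex Matrix
open scoped Real BigOperators Classical

noncomputable section

abbrev SL2Z := Matrix.SpecialLinearGroup (Fin 2) ℤ

/-- The integral bilinear form attached to a Gram matrix `S`. -/
def bilinZ {ι : Type*} [Fintype ι] (S : Matrix ι ι ℤ) (x y : ι → ℤ) : ℤ :=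
  ∑ i, ∑ j, x i * S i j * y j

def bilinQ {ι : Type*} [Fintype ι] (S : Matrix ι ι ℤ) (x y : ι → ℚ) : ℚ :=
  ∑ i, ∑ j, x i * (S i j : ℚ) * y j

def bilinR {ι : Type*} [Fintype ι] (S : Matrix ι ι ℤ) (x y : ι → ℝ) : ℝ :=
  ∑ i, ∑ j, x i * (S i j : ℝ) * y j

def bilinC {ι : Type*} [Fintype ι] (S : Matrix ι ι ℤ) (x y : ι → ℂ) : ℂ :=
  ∑ i, ∑ j, x i * (S i j : ℂ) * y j

/-- `S` is the Gram matrix of an even positive definite lattice. -/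
structure IsEvenPosDef {ι : Type*} [Fintype ι] (S : Matrix ι ι ℤ) : Prop where
  symm : S.IsSymm
  posdef : ∀ x : ι → ℚ, x ≠ 0 → 0 < bilinQ S x x
  even_diag : ∀ i, (2 : ℤ) ∣ S i i

/-- `l ∈ (1/2) L^∨`, written in lattice coordinates:  `2(l,x) ∈ ℤ` for every lattice vector. -/
def InHalfDual {ι : Type*} [Fintype ι] (S : Matrix ι ι ℤ) (l : ι → ℚ) : Prop :=
  ∀ x : ι → ℤ, ∃ m : ℤ, 2 * bilinQ S l (fun i => (x i : ℚ)) = m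

/-- `φ` is a holomorphic Jacobi form of weight `k` and index `t` for the lattice `(ℤ^ι, S)`
with `SL₂(ℤ)`-character (multiplier system) `χ`, Heisenberg character `ν`,
and Fourier coefficients `f`. -/
structure IsJacobiForm {ι : Type*} [Fintype ι] (S : Matrix ι ι ℤ) (k t : ℚ)
    (χ : SL2Z → ℂ) (ν : (ι → ℤ) → (ι → ℤ) → ℂ)
    (f : ℚ × (ι → ℚ) → ℂ) (φ : ℂ → (ι → ℂ) → ℂ) : Prop where
  holo : DifferentiableOn ℂ (fun p : ℂ × (ι → ℂ) => φ p.1 p.2) {p | 0 < p.1.im}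
  modular : ∀ A : SL2Z, ∀ τ : ℂ, 0 < τ.im → ∀ z : ι → ℂ,
    φ (((A.1 0 0 : ℂ) * τ + (A.1 0 1 : ℂ)) / ((A.1 1 0 : ℂ) * τ + (A.1 1 1 : ℂ)))
        (fun i => z i / ((A.1 1 0 : ℂ) * τ + (A.1 1 1 : ℂ)))
      = χ A * ((A.1 1 0 : ℂ) * τ + (A.1 1 1 : ℂ)) ^ (k : ℂ)
        * Complex.exp ((π : ℂ) * I * (t : ℂ) * (A.1 1 0 : ℂ) * bilinC S z z
            / ((A.1 1 0 : ℂ) * τ + (A.1 1 1 : ℂ)))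
        * φ τ z
  elliptic : ∀ x y : ι → ℤ, ∀ τ : ℂ, 0 < τ.im → ∀ z : ι → ℂ,
    φ τ (fun i => z i + (x i : ℂ) * τ + (y i : ℂ))
      = ν x y * Complex.exp (-((π : ℂ) * I * (t : ℂ))
            * ((bilinZ S x x : ℂ) * τ + 2 * bilinC S (fun i => (x i : ℂ)) z))
        * φ τ z
  support : ∀ p : ℚ × (ι → ℚ), f p ≠ 0 →
    0 ≤ p.1 ∧ InHalfDual S p.2 ∧ 0 ≤ 2 * p.1 * t - bilinQ S p.2 p.2
  expansion : ∀ τ : ℂ, 0 < τ.im → ∀ z : ι → ℂ,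
    HasSum (fun p : ℚ × (ι → ℚ) =>
        f p * Complex.exp (2 * (π : ℂ) * I *
          ((p.1 : ℂ) * τ + bilinC S (fun i => (p.2 i : ℂ)) z))) (φ τ z)

/-- The Fourier coefficients `f` are supported on indices of positive hyperbolic norm
(cusp form condition). -/
def IsCuspSupport {ι : Type*} [Fintype ι] (S : Matrix ι ι ℤ) (t : ℚ)
    (f : ℚ × (ι → ℚ) → ℂ) : Prop :=
  ∀ p : ℚ × (ι → ℚ), f p ≠ 0 → 0 < 2 * p.1 * t - bilinQ S p.2 p.2

/-- `c` is a root of unity. -/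
def HasFiniteOrder (c : ℂ) : Prop := ∃ N : ℕ, 0 < N ∧ c ^ N = 1

/-- The quadratic character mod 4. -/
def chi4 (n : ℤ) : ℂ := if n % 4 = 1 then 1 else if n % 4 = 3 then -1 else 0

/-- The classical Jacobi theta-series of characteristic `(1/2,1/2)`. -/
def jtheta (τ z : ℂ) : ℂ :=
  ∑' n : ℤ, chi4 n *
    Complex.exp (2 * (π : ℂ) * I * (((n : ℂ) ^ 2 * τ) / 8 + (n : ℂ) * z / 2))

/-- The Dedekind eta function. -/
def dedekindEta (τ : ℂ) : ℂ :=
  Complex.exp ((π : ℂ) * I * τ / 12) *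
    ∏' n : ℕ, (1 - Complex.exp (2 * (π : ℂ) * I * ((n : ℂ) + 1) * τ))

/-- Congruence condition `Am·(1,0;0,m) ≡ (1,0;0,m)·A  (mod Q)`. -/
def CongrCond (Q m : ℕ) (A Am : SL2Z) : Prop :=
  ∀ i j, (Am.1 * !![(1 : ℤ), 0; 0, (m : ℤ)]) i j
      ≡ (!![(1 : ℤ), 0; 0, (m : ℤ)] * A.1) i j [ZMOD (Q : ℤ)]

/-- `σ_a ≡ (a⁻¹, 0; 0, a) (mod Q)`. -/
def SigmaCond (Q : ℕ) (a : ℕ) (σa : SL2Z) : Prop :=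
  ∃ a' : ℤ, (a : ℤ) * a' ≡ 1 [ZMOD (Q : ℤ)] ∧
    σa.1 0 0 ≡ a' [ZMOD (Q : ℤ)] ∧ σa.1 0 1 ≡ 0 [ZMOD (Q : ℤ)] ∧
    σa.1 1 0 ≡ 0 [ZMOD (Q : ℤ)] ∧ σa.1 1 1 ≡ (a : ℤ) [ZMOD (Q : ℤ)]

/-- The `m`-th Hecke translate `(φ|_{k,t} T_-^{(Q)}(m))(τ,𝔷)
    = ∑_{ad=m, a>0} ∑_{b mod d} a^k v_η^D(σ_a) φ((aτ+bQ)/d, a𝔷)`. -/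
def heckeSum {ι : Type*} [Fintype ι] (φ : ℂ → (ι → ℂ) → ℂ) (vη : SL2Z → ℂ)
    (σ : ℕ → SL2Z) (k : ℤ) (Q m : ℕ) (τ : ℂ) (z : ι → ℂ) : ℂ :=
  ∑ a ∈ m.divisors, ∑ bb ∈ Finset.range (m / a),
    (a : ℂ) ^ k * vη (σ a)
      * φ (((a : ℂ) * τ + (bb : ℂ) * (Q : ℂ)) / ((m / a : ℕ) : ℂ)) (fun i => (a : ℂ) * z i)

/-- The `m`-th term `m⁻¹(φ|_k T_-^{(Q)}(m)) e^{2πi(m/Q)ω}` of the lifting, as a function of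
`(τ, 𝔷, ω)`; it is zero unless `m ≥ 1` and `m ≡ μ (mod Q)`. -/
def liftTerm {ι : Type*} [Fintype ι] (φ : ℂ → (ι → ℂ) → ℂ) (vη : SL2Z → ℂ)
    (σ : ℕ → SL2Z) (k : ℤ) (Q : ℕ) (μ : ℤ) (m : ℕ) (p : ℂ × (ι → ℂ) × ℂ) : ℂ :=
  if 1 ≤ m ∧ (m : ℤ) ≡ μ [ZMOD (Q : ℤ)] then
    (m : ℂ)⁻¹ * heckeSum φ vη σ k Q m p.1 p.2.1
      * Complex.exp (2 * (π : ℂ) * I * ((m : ℂ) / (Q : ℂ)) * p.2.2)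
  else 0

/-- The tube domain `H(L(N))` of the even lattice `L(N)`, `N = Qt`. -/
def tubeDom {ι : Type*} [Fintype ι] (S : Matrix ι ι ℤ) (N : ℚ) : Set (ℂ × (ι → ℂ) × ℂ) :=
  {p | 0 < p.1.im ∧ 0 < p.2.2.im ∧
    (N : ℝ) * bilinR S (fun i => (p.2.1 i).im) (fun i => (p.2.1 i).im)
      < 2 * p.1.im * p.2.2.im}

/-- The lifting `Lift_μ(φ)` as the sum of its Fourier–Jacobi series. -/
def liftFun {ι : Type*} [Fintype ι] (φ : ℂ → (ι → ℂ) → ℂ) (vη : SL2Z → ℂ)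
    (σ : ℕ → SL2Z) (k : ℤ) (Q : ℕ) (μ : ℤ) (p : ℂ × (ι → ℂ) × ℂ) : ℂ :=
  ∑' m : ℕ, liftTerm φ vη σ k Q μ m p

/-- The Fourier coefficient of `Lift_μ(φ)` at `(n, l, m)`:
`∑_{a | (n,l,m)} a^{k-1} v_η^D(σ_a) f̃(nm/a², l/a)`, written in terms of the Fourier
coefficients `f` of `φ` (whose exponents are `ñ/Q` with `ñ ≡ 1 (mod Q)`). -/
def liftCoeff {ι : Type*} [Fintype ι] (S : Matrix ι ι ℤ) (f : ℚ × (ι → ℚ) → ℂ)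
    (vη : SL2Z → ℂ) (σ : ℕ → SL2Z) (k : ℤ) (Q : ℕ) (μ : ℤ)
    (q : ℤ × (ι → ℚ) × ℤ) : ℂ :=
  if 1 ≤ q.1 ∧ 1 ≤ q.2.2 ∧ q.1 ≡ μ [ZMOD (Q : ℤ)] ∧ q.2.2 ≡ μ [ZMOD (Q : ℤ)] then
    ∑ a ∈ (Int.gcd q.1 q.2.2).divisors,
      if InHalfDual S (fun i => q.2.1 i / (a : ℚ)) then
        (a : ℂ) ^ (k - 1) * vη (σ a)
          * f (((q.1 * q.2.2 : ℤ) : ℚ) / ((a : ℚ) ^ 2 * (Q : ℚ)), fun i => q.2.1 i / (a : ℚ))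
      else 0
  else 0

/-! ### Bilinear form facts -/

section aux

variable {ι : Type*} [Fintype ι]

lemma bilinR_self_nonneg {S : Matrix ι ι ℤ} (hS : IsEvenPosDef S) (x : ι → ℝ) :
    0 ≤ bilinR S x x := by
  have hd : DenseRange (fun (q : ι → ℚ) (i : ι) => ((q i : ℚ) : ℝ)) := by
    have := DenseRange.piMap (fun _ : ι => Rat.denseRange_cast (𝕜 := ℝ))
    exact this
  refine hd.induction_on (p := fun x => 0 ≤ bilinR S x x) x ?_ ?_
  · apply isClosed_le continuous_const
    unfold bilinR
    fun_prop
  · intro q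
    have h : (0 : ℚ) ≤ bilinQ S q q := by
      by_cases hq : q = 0
      · subst hq; simp [bilinQ]
      · exact (hS.posdef q hq).le
    have : ((bilinQ S q q : ℚ) : ℝ) = bilinR S (fun i => (q i : ℝ)) (fun i => (q i : ℝ)) := by
      simp [bilinQ, bilinR]
    rw [← this]; exact_mod_cast h

lemma bilinR_symm {S : Matrix ι ι ℤ} (hS : IsEvenPosDef S) (x y : ι → ℝ) :
    bilinR S x y = bilinR S y x := by
  unfold bilinR
  rw [Finset.sum_comm]
  refine Finset.sum_congr rfl fun i _ => Finset.sum_congr rfl fun j _ => ?_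
  have : S j i = S i j := hS.symm.apply i j
  rw [this]; ring

lemma bilinR_add_smul (S : Matrix ι ι ℤ) (x y z : ι → ℝ) (s : ℝ) :
    bilinR S (fun i => x i + s * y i) z = bilinR S x z + s * bilinR S y z := by
  unfold bilinR
  rw [Finset.mul_sum, ← Finset.sum_add_distrib]
  refine Finset.sum_congr rfl fun i _ => ?_
  rw [Finset.mul_sum, ← Finset.sum_add_distrib]
  refine Finset.sum_congr rfl fun j _ => ?_
  ring

lemma bilinR_expand {S : Matrix ι ι ℤ} (hS : IsEvenPosDef S) (x y : ι → ℝ) (s : ℝ) :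
    bilinR S (fun i => x i + s * y i) (fun i => x i + s * y i)
      = bilinR S x x + 2 * s * bilinR S x y + s ^ 2 * bilinR S y y := by
  rw [bilinR_add_smul, bilinR_symm hS x, bilinR_symm hS y, bilinR_add_smul, bilinR_add_smul,
    bilinR_symm hS y x]
  ring

lemma bilinR_cs {S : Matrix ι ι ℤ} (hS : IsEvenPosDef S) (x y : ι → ℝ) :
    bilinR S x y ^ 2 ≤ bilinR S x x * bilinR S y y := by
  have h : ∀ s : ℝ, 0 ≤ bilinR S y y * (s * s) + 2 * bilinR S x y * s + bilinR S x x := by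
    intro s
    have := bilinR_self_nonneg hS (fun i => x i + s * y i)
    rw [bilinR_expand hS] at this
    linarith
  have := discrim_le_zero h
  unfold discrim at this
  nlinarith

lemma bilinC_im (S : Matrix ι ι ℤ) (l : ι → ℝ) (z : ι → ℂ) :
    (bilinC S (fun i => (l i : ℂ)) z).im = bilinR S l (fun i => (z i).im) := by
  unfold bilinC bilinR
  rw [Complex.im_sum]
  refine Finset.sum_congr rfl fun i _ => ?_
  rw [Complex.im_sum]
  refine Finset.sum_congr rfl fun j _ => ?_
  have : (l i : ℂ) * (S i j : ℂ) = ((l i * (S i j : ℝ) : ℝ) : ℂ) := by push_cast; ring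
  rw [this, Complex.im_ofReal_mul]

lemma bilinC_imQ (S : Matrix ι ι ℤ) (l : ι → ℚ) (z : ι → ℂ) :
    (bilinC S (fun i => (l i : ℂ)) z).im = bilinR S (fun i => (l i : ℝ)) (fun i => (z i).im) := by
  rw [← bilinC_im]; simp

lemma bilinC_imZ (S : Matrix ι ι ℤ) (l : ι → ℤ) (z : ι → ℂ) :
    (bilinC S (fun i => (l i : ℂ)) z).im = bilinR S (fun i => (l i : ℝ)) (fun i => (z i).im) := by
  rw [← bilinC_im]; simp

lemma bilinQ_cast (S : Matrix ι ι ℤ) (x y : ι → ℚ) :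
    ((bilinQ S x y : ℚ) : ℝ) = bilinR S (fun i => (x i : ℝ)) (fun i => (y i : ℝ)) := by
  simp [bilinQ, bilinR]

lemma bilinZ_cast (S : Matrix ι ι ℤ) (x y : ι → ℤ) :
    ((bilinZ S x y : ℤ) : ℝ) = bilinR S (fun i => (x i : ℝ)) (fun i => (y i : ℝ)) := by
  simp [bilinZ, bilinR]

lemma bilinC_ofReal (S : Matrix ι ι ℤ) (x y : ι → ℝ) :
    bilinC S (fun i => (x i : ℂ)) (fun i => (y i : ℂ)) = ((bilinR S x y : ℝ) : ℂ) := by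
  simp [bilinC, bilinR]

lemma bilinC_smul_right (S : Matrix ι ι ℤ) (x y : ι → ℂ) (c : ℂ) :
    bilinC S x (fun i => c * y i) = c * bilinC S x y := by
  unfold bilinC
  simp_rw [Finset.mul_sum]
  refine Finset.sum_congr rfl fun i _ => Finset.sum_congr rfl fun j _ => ?_
  ring

lemma bilinC_smul_left (S : Matrix ι ι ℤ) (x y : ι → ℂ) (c : ℂ) :
    bilinC S (fun i => c * x i) y = c * bilinC S x y := by
  unfold bilinC
  simp_rw [Finset.mul_sum]
  refine Finset.sum_congr rfl fun i _ => Finset.sum_congr rfl fun j _ => ?_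
  ring

lemma bilinR_smul_right (S : Matrix ι ι ℤ) (x y : ι → ℝ) (c : ℝ) :
    bilinR S x (fun i => c * y i) = c * bilinR S x y := by
  unfold bilinR
  simp_rw [Finset.mul_sum]
  refine Finset.sum_congr rfl fun i _ => Finset.sum_congr rfl fun j _ => ?_
  ring

lemma bilinR_smul_left (S : Matrix ι ι ℤ) (x y : ι → ℝ) (c : ℝ) :
    bilinR S (fun i => c * x i) y = c * bilinR S x y := by
  unfold bilinR
  simp_rw [Finset.mul_sum]
  refine Finset.sum_congr rfl fun i _ => Finset.sum_congr rfl fun j _ => ?_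
  ring

lemma bilinQ_smul_smul (S : Matrix ι ι ℤ) (x : ι → ℚ) (c : ℚ) :
    bilinQ S (fun i => x i / c) (fun i => x i / c) = bilinQ S x x / c ^ 2 := by
  unfold bilinQ
  simp_rw [Finset.sum_div]
  refine Finset.sum_congr rfl fun i _ => Finset.sum_congr rfl fun j _ => ?_
  ring

/-- norm of exp(2πi w). -/
lemma norm_exp_two_pi_I_mul (w : ℂ) :
    ‖Complex.exp (2 * (π : ℂ) * I * w)‖ = Real.exp (-(2 * π * w.im)) := by
  rw [Complex.norm_exp]
  congr 1
  simp [Complex.mul_re, Complex.mul_im]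

/-! ### The eta character has absolute value one -/

lemma dedekindEta_ne_zero {τ : ℂ} (hτ : 0 < τ.im) : dedekindEta τ ≠ 0 := by
  unfold dedekindEta
  refine mul_ne_zero (Complex.exp_ne_zero _) ?_
  have := ModularForm.eta_tprod_ne_zero (z := τ) hτ
  simpa [ModularForm.eta_q_eq_cexp] using this

lemma dedekindEta_add_one (τ : ℂ) :
    dedekindEta (τ + 1) = Complex.exp ((π : ℂ) * I / 12) * dedekindEta τ := by
  unfold dedekindEta
  have h1 : Complex.exp ((π : ℂ) * I * (τ + 1) / 12)
      = Complex.exp ((π : ℂ) * I / 12) * Complex.exp ((π : ℂ) * I * τ / 12) := by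
    rw [← Complex.exp_add]; ring_nf
  have h2 : ∀ n : ℕ, Complex.exp (2 * (π : ℂ) * I * ((n : ℂ) + 1) * (τ + 1))
      = Complex.exp (2 * (π : ℂ) * I * ((n : ℂ) + 1) * τ) := by
    intro n
    have : 2 * (π : ℂ) * I * ((n : ℂ) + 1) * (τ + 1)
      = 2 * (π : ℂ) * I * ((n : ℂ) + 1) * τ + ((n + 1 : ℕ) : ℂ) * (2 * π * I) := by
        push_cast; ring
    rw [this, Complex.exp_add, Complex.exp_nat_mul_two_pi_mul_I, mul_one]
  simp_rw [h1, h2]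
  ring

lemma mob_den_ne (A : SL2Z) {τ : ℂ} (hτ : 0 < τ.im) :
    ((A.1 1 0 : ℂ) * τ + (A.1 1 1 : ℂ)) ≠ 0 := by
  intro h
  have h1 := congrArg Complex.im h
  have h2 := congrArg Complex.re h
  simp at h1 h2
  have hdet := A.2
  rw [Matrix.det_fin_two] at hdet
  rcases h1 with h1 | h1
  · rw [h1] at h2 hdet
    simp at h2
    rw [h2] at hdet
    simp at hdet
  · exact hτ.ne' h1

lemma mob_im (A : SL2Z) {τ : ℂ} (hτ : 0 < τ.im) :
    (((A.1 0 0 : ℂ) * τ + (A.1 0 1 : ℂ)) / ((A.1 1 0 : ℂ) * τ + (A.1 1 1 : ℂ))).im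
      = τ.im / ‖(A.1 1 0 : ℂ) * τ + (A.1 1 1 : ℂ)‖ ^ 2 := by
  have hdet := A.2
  rw [Matrix.det_fin_two] at hdet
  have hdet' : (A.1 0 0 : ℝ) * A.1 1 1 - A.1 0 1 * A.1 1 0 = 1 := by exact_mod_cast hdet
  have hne := mob_den_ne A hτ
  have hn : Complex.normSq ((A.1 1 0 : ℂ) * τ + (A.1 1 1 : ℂ)) ≠ 0 := by
    simpa [Complex.normSq_eq_zero] using hne
  rw [← Complex.normSq_eq_norm_sq, Complex.div_im, ← sub_div]
  congr 1
  simp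
  linear_combination τ.im * hdet'

lemma mob_im_pos (A : SL2Z) {τ : ℂ} (hτ : 0 < τ.im) :
    0 < (((A.1 0 0 : ℂ) * τ + (A.1 0 1 : ℂ)) / ((A.1 1 0 : ℂ) * τ + (A.1 1 1 : ℂ))).im := by
  rw [mob_im A hτ]
  have := norm_pos_iff.mpr (mob_den_ne A hτ)
  positivity

lemma mob_mul (A B : SL2Z) {τ : ℂ} (hτ : 0 < τ.im) (j : ℂ) (w : ℂ)
    (hj : j = (B.1 1 0 : ℂ) * τ + (B.1 1 1 : ℂ))
    (hw : w = ((B.1 0 0 : ℂ) * τ + (B.1 0 1 : ℂ)) / j) :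
    (((A * B).1 1 0 : ℂ) * τ + ((A * B).1 1 1 : ℂ)) = ((A.1 1 0 : ℂ) * w + (A.1 1 1 : ℂ)) * j ∧
    (((A * B).1 0 0 : ℂ) * τ + ((A * B).1 0 1 : ℂ)) / (((A * B).1 1 0 : ℂ) * τ + ((A * B).1 1 1 : ℂ))
      = ((A.1 0 0 : ℂ) * w + (A.1 0 1 : ℂ)) / ((A.1 1 0 : ℂ) * w + (A.1 1 1 : ℂ)) := by
  have hj0 : j ≠ 0 := by rw [hj]; exact mob_den_ne B hτ
  have hwj : w * j = (B.1 0 0 : ℂ) * τ + (B.1 0 1 : ℂ) := by rw [hw]; field_simp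
  have e1 : (((A * B).1 1 0 : ℂ) * τ + ((A * B).1 1 1 : ℂ))
      = ((A.1 1 0 : ℂ) * w + (A.1 1 1 : ℂ)) * j := by
    rw [add_mul, mul_assoc, hwj, hj]
    simp [Matrix.mul_apply, Fin.sum_univ_two]
    ring
  have e2 : (((A * B).1 0 0 : ℂ) * τ + ((A * B).1 0 1 : ℂ))
      = ((A.1 0 0 : ℂ) * w + (A.1 0 1 : ℂ)) * j := by
    rw [add_mul, mul_assoc, hwj, hj]
    simp [Matrix.mul_apply, Fin.sum_univ_two]
    ring
  refine ⟨e1, ?_⟩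
  rw [e1, e2, mul_div_mul_right _ _ hj0]

lemma norm_vη_eq_one (D : ℕ) (vη : SL2Z → ℂ)
    (hvη : ∀ A : SL2Z, ∀ τ : ℂ, 0 < τ.im →
      dedekindEta (((A.1 0 0 : ℂ) * τ + (A.1 0 1 : ℂ))
            / ((A.1 1 0 : ℂ) * τ + (A.1 1 1 : ℂ))) ^ D
        = vη A * ((A.1 1 0 : ℂ) * τ + (A.1 1 1 : ℂ)) ^ (D / 2) * dedekindEta τ ^ D)
    (A : SL2Z) : ‖vη A‖ = 1 := by
  have hI : 0 < (I : ℂ).im := by simp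
  have hmul : ∀ A B, vη (A * B) = vη A * vη B := by
    intro A B
    have h1 := hvη (A * B) I hI
    have h2 := hvη B I hI
    have hw := mob_im_pos B hI
    have h3 := hvη A _ hw
    obtain ⟨e1, e2⟩ := mob_mul A B hI _ _ rfl rfl
    rw [e2, h3, h2, e1, mul_pow] at h1
    have n1 := pow_ne_zero (D / 2) (mob_den_ne A hw)
    have n2 := pow_ne_zero (D / 2) (mob_den_ne B hI)
    have n3 := pow_ne_zero D (dedekindEta_ne_zero hI)
    have := mul_ne_zero (mul_ne_zero n1 n2) n3
    apply mul_right_cancel₀ this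
    linear_combination -h1
  have h1 : vη 1 = 1 := by
    have h1 := hvη 1 I hI
    simp at h1
    have n3 := pow_ne_zero D (dedekindEta_ne_zero hI)
    exact (mul_left_eq_self₀.mp h1.symm).resolve_right n3
  have hS : ‖vη ModularGroup.S‖ = 1 := by
    have h2 : ModularGroup.S * ModularGroup.S = (-1 : SL2Z) := by
      ext i j; fin_cases i <;> fin_cases j <;> rfl
    have h3 : vη (-1) * vη (-1) = 1 := by rw [← hmul]; simpa using h1
    rw [← h2, hmul] at h3
    have h4 := congrArg norm h3
    simp only [norm_mul, norm_one] at h4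
    have : ‖vη ModularGroup.S‖ ^ 4 = 1 := by rw [← h4]; ring
    exact (pow_eq_one_iff_of_nonneg (norm_nonneg _) (by norm_num)).mp this
  have hT : ‖vη ModularGroup.T‖ = 1 := by
    have h2 := hvη ModularGroup.T I hI
    have n3 := norm_ne_zero_iff.mpr (pow_ne_zero D (dedekindEta_ne_zero hI))
    simp [ModularGroup.T] at h2
    rw [dedekindEta_add_one, mul_pow] at h2
    have h3 := congrArg norm h2
    simp only [norm_mul, norm_pow] at h3
    have h4 : ‖Complex.exp ((π : ℂ) * I / 12)‖ = 1 := by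
      rw [Complex.norm_exp]; simp
    rw [h4, one_pow] at h3
    rw [norm_pow] at n3
    exact (mul_right_cancel₀ n3 h3).symm
  have hA : A ∈ Subgroup.closure {ModularGroup.S, ModularGroup.T} := by
    rw [SpecialLinearGroup.SL2Z_generators]; trivial
  induction hA using Subgroup.closure_induction with
  | mem x hx =>
    rcases hx with rfl | rfl
    · exact hS
    · exact hT
  | one => simp [h1]
  | mul x y _ _ hx hy => rw [hmul, norm_mul, hx, hy, one_mul]
  | inv x _ hx =>
    have := hmul x x⁻¹
    rw [mul_inv_cancel, h1] at this
    have h4 := congrArg norm this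
    rw [norm_mul, hx, one_mul, norm_one] at h4
    exact h4.symm

/-! ### Mean value lemma -/

lemma mean_geom {z : ℂ} (hz : z ≠ 1) (hn : ‖z‖ = 1) :
    Filter.Tendsto (fun N : ℕ => (N : ℂ)⁻¹ * ∑ s ∈ Finset.range N, z ^ s) Filter.atTop (nhds 0) := by
  rw [tendsto_zero_iff_norm_tendsto_zero]
  have h1 : Filter.Tendsto (fun N : ℕ => (2 / ‖z - 1‖) * (N : ℝ)⁻¹) Filter.atTop (nhds 0) := by
    simpa using (tendsto_inv_atTop_nhds_zero_nat (𝕜 := ℝ)).const_mul (2 / ‖z - 1‖)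
  refine squeeze_zero (fun _ => norm_nonneg _) (fun N => ?_) h1
  rw [geom_sum_eq hz, norm_mul, norm_div, norm_inv, Complex.norm_natCast, mul_comm]
  gcongr
  calc ‖z ^ N - 1‖ ≤ ‖z ^ N‖ + ‖(1 : ℂ)‖ := norm_sub_le _ _
    _ = 2 := by rw [norm_pow, hn]; norm_num

lemma mean_bound {P : Type*} (c : P → ℂ) (hc : Summable (fun p => ‖c p‖)) (θ : P → ℝ)
    (hθ : ∀ p q, p ≠ q → ∀ m : ℤ, θ p - θ q ≠ m) (M : ℝ)
    (h : ∀ s : ℕ, ‖∑' p, c p * Complex.exp (2 * (π : ℂ) * I * ((s : ℂ) * (θ p : ℂ)))‖ ≤ M)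
    (p : P) : ‖c p‖ ≤ M := by
  have hM : 0 ≤ M := (norm_nonneg _).trans (h 0)
  let E : P → ℂ := fun q => Complex.exp (2 * (π : ℂ) * I * ((θ q - θ p : ℝ) : ℂ))
  have hE : ∀ q, ‖E q‖ = 1 := by
    intro q
    simp only [E]; rw [norm_exp_two_pi_I_mul, Complex.ofReal_im]; simp
  have hlim : Filter.Tendsto (fun N : ℕ => ∑' q, c q * ((N : ℂ)⁻¹ * ∑ s ∈ Finset.range N, E q ^ s))
      Filter.atTop (nhds (∑' q, if q = p then c p else 0)) := by
    refine tendsto_tsum_of_dominated_convergence hc ?_ ?_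
    · intro q
      by_cases hq : q = p
      · subst hq
        simp only [if_true]
        have hE1 : E q = 1 := by simp [E]
        refine tendsto_const_nhds.congr' ?_
        filter_upwards [Filter.eventually_gt_atTop 0] with N hN
        have : (N : ℂ) ≠ 0 := by exact_mod_cast hN.ne'
        simp [hE1, this]
      · simp only [hq, if_false]
        have hE1 : E q ≠ 1 := by
          intro he
          rw [Complex.exp_eq_one_iff] at he
          obtain ⟨m, hm⟩ := he
          refine hθ q p hq m ?_
          have h2 : (2 * (π : ℂ) * I) ≠ 0 := Complex.two_pi_I_ne_zero
          have h3 : ((θ q - θ p : ℝ) : ℂ) = (m : ℂ) := by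
            apply mul_left_cancel₀ h2
            rw [hm]; ring
          exact_mod_cast h3
        simpa using (mean_geom hE1 (hE q)).const_mul (c q)
    · refine Filter.Eventually.of_forall fun N q => ?_
      rw [norm_mul]
      refine mul_le_of_le_one_right (norm_nonneg _) ?_
      rw [norm_mul, norm_inv, Complex.norm_natCast]
      have : ‖∑ s ∈ Finset.range N, E q ^ s‖ ≤ N := by
        refine (norm_sum_le _ _).trans ?_
        simp [hE]
      rcases Nat.eq_zero_or_pos N with h0 | h0
      · subst h0; simp
      · have h0' : (0 : ℝ) < N := by exact_mod_cast h0
        rw [inv_mul_le_iff₀ h0']; simpa using this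
  rw [tsum_ite_eq p (fun _ => c p)] at hlim
  refine le_of_tendsto hlim.norm (Filter.Eventually.of_forall fun N => ?_)
  have hsum : ∀ s : ℕ, Summable (fun q => c q * E q ^ s) := by
    intro s
    refine Summable.of_norm ?_
    simpa [hE] using hc
  have e1 : (∑' q, c q * ((N : ℂ)⁻¹ * ∑ s ∈ Finset.range N, E q ^ s))
      = (N : ℂ)⁻¹ * ∑ s ∈ Finset.range N, ∑' q, c q * E q ^ s := by
    rw [← Summable.tsum_finsetSum (fun s _ => hsum s), ← tsum_mul_left]
    refine tsum_congr fun q => ?_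
    rw [← Finset.mul_sum]; ring
  rw [e1, norm_mul, norm_inv, Complex.norm_natCast]
  have e2 : ∀ s : ℕ, ‖∑' q, c q * E q ^ s‖ ≤ M := by
    intro s
    have : ∀ q, c q * E q ^ s = Complex.exp (2 * (π : ℂ) * I * ((-(s * θ p) : ℝ) : ℂ))
        * (c q * Complex.exp (2 * (π : ℂ) * I * ((s : ℂ) * (θ q : ℂ)))) := by
      intro q
      simp only [E]
      rw [← Complex.exp_nat_mul, mul_left_comm (Complex.exp _) (c q), ← Complex.exp_add]
      push_cast
      ring_nf
    simp_rw [this]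
    rw [tsum_mul_left, norm_mul, norm_exp_two_pi_I_mul, Complex.ofReal_im]
    simpa using h s
  have e3 : ‖∑ s ∈ Finset.range N, ∑' q, c q * E q ^ s‖ ≤ N * M := by
    refine (norm_sum_le _ _).trans ?_
    refine (Finset.sum_le_sum (fun s _ => e2 s)).trans ?_
    simp
  rcases Nat.eq_zero_or_pos N with h0 | h0
  · subst h0; simpa using hM
  · have h0' : (0 : ℝ) < N := by exact_mod_cast h0
    rw [inv_mul_le_iff₀ h0']; exact e3

/-- There are reals `u₀, x₀ i` linearly independent together with `1` over the rationals. -/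
lemma exists_generic (ι : Type*) [Fintype ι] : ∃ (u : ℝ) (x : ι → ℝ), ∀ (c : ℚ) (b : ι → ℚ) (r : ℚ),
    (c : ℝ) * u + ∑ i, (b i : ℝ) * x i = r → c = 0 ∧ b = 0 := by
  let B := Module.Basis.ofVectorSpace ℚ ℝ
  have hinf : Infinite (Module.Basis.ofVectorSpaceIndex ℚ ℝ) := by
    by_contra hfin
    rw [not_infinite_iff_finite] at hfin
    have h1 : Module.Finite ℚ ℝ := Module.Finite.of_basis B
    have h2 := Real.rank_rat_real
    have h3 := Module.rank_lt_aleph0 ℚ ℝ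
    rw [h2] at h3
    exact absurd h3 (not_lt.mpr Cardinal.aleph0_le_continuum)
  let e : Option (Option ι) ↪ Module.Basis.ofVectorSpaceIndex ℚ ℝ :=
    (Fintype.equivFin (Option (Option ι))).toEmbedding.trans
      ((Fin.valEmbedding).trans (Infinite.natEmbedding _))
  have hli : LinearIndependent ℚ (fun i => B (e i)) := B.linearIndependent.comp e e.injective
  let g : Option (Option ι) → ℝ := fun i => B (e i)
  have hg0 : g none ≠ 0 := hli.ne_zero none
  refine ⟨g (some none) / g none, fun i => g (some (some i)) / g none, ?_⟩
  intro c b r h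
  rw [Fintype.linearIndependent_iff] at hli
  have key := hli (fun o => match o with
    | none => -r
    | some none => c
    | some (some i) => b i) (by
      rw [Fintype.sum_option, Fintype.sum_option]
      simp only [Rat.smul_def]
      change ((-r : ℚ) : ℝ) * g none + ((c : ℝ) * g (some none) + ∑ i, (b i : ℝ) * g (some (some i))) = 0
      have : (∑ i, (b i : ℝ) * (g (some (some i)) / g none)) * g none
          = ∑ i, (b i : ℝ) * g (some (some i)) := by
        rw [Finset.sum_mul]
        refine Finset.sum_congr rfl fun i _ => ?_
        field_simp
      rw [← this]
      have h3 : (c : ℝ) * g (some none) = (c : ℝ) * (g (some none) / g none) * g none := by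
        field_simp
      rw [h3]
      push_cast
      linear_combination g none * h)
  refine ⟨key (some none), ?_⟩
  funext i
  exact key (some (some i))

lemma dual_inj {S : Matrix ι ι ℤ} (hS : IsEvenPosDef S) (l : ι → ℚ)
    (h : ∀ j, ∑ i, l i * (S i j : ℚ) = 0) : l = 0 := by
  by_contra hl
  have := hS.posdef l hl
  have h0 : bilinQ S l l = 0 := by
    unfold bilinQ
    rw [Finset.sum_comm]
    refine Finset.sum_eq_zero fun j _ => ?_
    rw [← Finset.sum_mul, h j, zero_mul]
  linarith

lemma coeff_le {S : Matrix ι ι ℤ} (hS : IsEvenPosDef S) (f : ℚ × (ι → ℚ) → ℂ)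
    (φ : ℂ → (ι → ℂ) → ℂ)
    (hexp : ∀ τ : ℂ, 0 < τ.im → ∀ z : ι → ℂ,
      HasSum (fun p : ℚ × (ι → ℚ) =>
        f p * Complex.exp (2 * (π : ℂ) * I *
          ((p.1 : ℂ) * τ + bilinC S (fun i => (p.2 i : ℂ)) z))) (φ τ z))
    (v : ℝ) (hv : 0 < v) (M : ℝ)
    (hM : ∀ (u : ℝ) (x : ι → ℝ), ‖φ (u + v * I) (fun i => (x i : ℂ))‖ ≤ M) (p : ℚ × (ι → ℚ)) :
    ‖f p‖ * Real.exp (-(2 * π * (p.1 * v))) ≤ M := by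
  obtain ⟨u, x, hux⟩ := exists_generic ι
  have hbil : ∀ l : ι → ℚ, bilinR S (fun i => (l i : ℝ)) x
      = ∑ j, ((∑ i, l i * (S i j : ℚ) : ℚ) : ℝ) * x j := by
    intro l
    unfold bilinR
    rw [Finset.sum_comm]
    refine Finset.sum_congr rfl fun j _ => ?_
    push_cast
    rw [Finset.sum_mul]
  let c : ℚ × (ι → ℚ) → ℂ := fun p => f p * Complex.exp (2 * (π : ℂ) * I * ((p.1 : ℂ) * (v * I)))
  have hcn : ∀ p, ‖c p‖ = ‖f p‖ * Real.exp (-(2 * π * (p.1 * v))) := by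
    intro p
    simp only [c]
    rw [norm_mul, norm_exp_two_pi_I_mul]
    have : ((p.1 : ℂ) * (v * I)).im = p.1 * v := by
      have : ((p.1 : ℂ) * (v * I)) = ((p.1 * v : ℝ) : ℂ) * I := by push_cast; ring
      rw [this]; simp
    rw [this]
  rw [← hcn]
  have hterm : ∀ (s : ℕ) (p : ℚ × (ι → ℚ)),
      f p * Complex.exp (2 * (π : ℂ) * I *
          ((p.1 : ℂ) * (((s * u : ℝ) : ℂ) + v * I)
            + bilinC S (fun i => (p.2 i : ℂ)) (fun i => ((s * x i : ℝ) : ℂ))))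
      = c p * Complex.exp (2 * (π : ℂ) * I * ((s : ℂ) *
          ((p.1 * u + bilinR S (fun i => (p.2 i : ℝ)) x : ℝ) : ℂ))) := by
    intro s p
    simp only [c]
    rw [mul_assoc (f p), ← Complex.exp_add]
    have : bilinC S (fun i => (p.2 i : ℂ)) (fun i => ((s * x i : ℝ) : ℂ))
        = s * ((bilinR S (fun i => (p.2 i : ℝ)) x : ℝ) : ℂ) := by
      rw [← bilinC_ofReal, ← bilinC_smul_right]
      simp
    rw [this]
    push_cast
    ring_nf
  have him : ∀ s : ℕ, 0 < (((s * u : ℝ) : ℂ) + v * I).im := by intro s; simpa using hv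
  refine mean_bound c ?_ (fun p => p.1 * u + bilinR S (fun i => (p.2 i : ℝ)) x) ?_ M ?_ p
  · have h0 := (hexp _ (him 0) (fun i => (((0 : ℕ) * x i : ℝ) : ℂ))).summable.norm
    simp_rw [hterm 0] at h0
    simpa using h0
  · intro p q hpq m hm
    apply hpq
    simp only [hbil] at hm
    have h2 := hux (p.1 - q.1) (fun j => ∑ i, p.2 i * (S i j : ℚ) - ∑ i, q.2 i * (S i j : ℚ)) m (by
      push_cast
      push_cast at hm
      simp_rw [sub_mul, Finset.sum_sub_distrib]
      linarith)
    have h3 := dual_inj hS (fun i => p.2 i - q.2 i) (by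
      intro j
      have := congrFun h2.2 j
      simpa [sub_mul] using this)
    refine Prod.ext (sub_eq_zero.mp h2.1) ?_
    funext i
    exact sub_eq_zero.mp (congrFun h3 i)
  · intro s
    have h0 := (hexp _ (him s) (fun i => ((s * x i : ℝ) : ℂ)))
    simp_rw [hterm s] at h0
    rw [h0.tsum_eq]
    exact hM _ _

/-- bound of the weighted absolute value of a Jacobi form on `Im τ ≥ 1/2`, with the elliptic
variable in a fundamental cell. -/
lemma jacobi_bound_cell {S : Matrix ι ι ℤ} (hS : IsEvenPosDef S) {k t : ℚ} (ht : 0 < t)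
    {χ : SL2Z → ℂ} {ν : (ι → ℤ) → (ι → ℤ) → ℂ}
    {f : ℚ × (ι → ℚ) → ℂ} {φ : ℂ → (ι → ℂ) → ℂ} (hφ : IsJacobiForm S k t χ ν f φ) :
    ∃ M : ℝ, 0 ≤ M ∧ ∀ τ : ℂ, 1 / 2 ≤ τ.im → ∀ lam mu : ι → ℝ, (∀ i, 0 ≤ lam i ∧ lam i ≤ 1) →
      Real.exp (-(π * t * τ.im * bilinR S lam lam))
        * ‖φ τ (fun i => (lam i : ℂ) * τ + (mu i : ℂ))‖ ≤ M := by
  -- vertices of the cell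
  let vert : (ι → Bool) → ι → ℝ := fun ε i => if ε i then 1 else 0
  let g : (ι → Bool) → ℚ × (ι → ℚ) → ℝ := fun ε p =>
    ‖f p‖ * Real.exp (-(2 * π * (1 / 2 * (p.1 + bilinR S (fun i => (p.2 i : ℝ)) (vert ε)))))
  have hg0 : ∀ ε p, 0 ≤ g ε p := fun ε p => by positivity
  have hg : ∀ ε, Summable (g ε) := by
    intro ε
    have h := (hφ.expansion (((1 / 2 : ℝ) : ℂ) * I) (by simp)
      (fun i => ((vert ε i : ℝ) : ℂ) * (((1 / 2 : ℝ) : ℂ) * I))).summable.norm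
    refine h.congr fun p => ?_
    rw [norm_mul, norm_exp_two_pi_I_mul, Complex.add_im, bilinC_imQ]
    simp only [g]
    congr 4
    have h1 : ((p.1 : ℂ) * (((1 / 2 : ℝ) : ℂ) * I)).im = p.1 * (1 / 2) := by
      have : ((p.1 : ℂ) * (((1 / 2 : ℝ) : ℂ) * I)) = ((p.1 * (1 / 2) : ℝ) : ℂ) * I := by
        push_cast; ring
      rw [this]; simp
    have h2 : (fun i => (((vert ε i : ℝ) : ℂ) * (((1 / 2 : ℝ) : ℂ) * I)).im)
        = fun i => (1 / 2) * vert ε i := by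
      funext i
      simp [mul_comm]
    rw [h1, h2, bilinR_smul_right]
    ring
  refine ⟨∑' p, ∑ ε, g ε p, tsum_nonneg fun p => Finset.sum_nonneg fun ε _ => hg0 ε p, ?_⟩
  intro τ hτ lam mu hlam
  have hτ0 : 0 < τ.im := by linarith
  have hs := (hφ.expansion τ hτ0 (fun i => (lam i : ℂ) * τ + (mu i : ℂ)))
  rw [← hs.tsum_eq]
  have htr : (0 : ℝ) < t := by exact_mod_cast ht
  have hnorm : ∀ p : ℚ × (ι → ℚ), ‖f p * Complex.exp (2 * (π : ℂ) * I *
          ((p.1 : ℂ) * τ + bilinC S (fun i => (p.2 i : ℂ)) (fun i => (lam i : ℂ) * τ + (mu i : ℂ))))‖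
      = ‖f p‖ * Real.exp (-(2 * π * (τ.im * (p.1 + bilinR S (fun i => (p.2 i : ℝ)) lam)))) := by
    intro p
    rw [norm_mul, norm_exp_two_pi_I_mul, Complex.add_im, bilinC_imQ]
    congr 4
    have h1 : ((p.1 : ℂ) * τ).im = p.1 * τ.im := by
      have : ((p.1 : ℂ) * τ) = ((p.1 : ℝ) : ℂ) * τ := by push_cast; ring
      rw [this, Complex.im_ofReal_mul]
    have h2 : (fun i => ((lam i : ℂ) * τ + (mu i : ℂ)).im) = fun i => τ.im * lam i := by
      funext i
      simp [mul_comm]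
    rw [h1, h2, bilinR_smul_right]
    ring
  have hs1 := hs.summable.norm
  calc _ ≤ Real.exp (-(π * t * τ.im * bilinR S lam lam)) * ∑' p : ℚ × (ι → ℚ), ‖f p * Complex.exp (2 * (π : ℂ) * I *
          ((p.1 : ℂ) * τ + bilinC S (fun i => (p.2 i : ℂ)) (fun i => (lam i : ℂ) * τ + (mu i : ℂ))))‖ := by
        gcongr
        exact norm_tsum_le_tsum_norm hs1
    _ = ∑' p : ℚ × (ι → ℚ), Real.exp (-(π * t * τ.im * bilinR S lam lam)) * ‖f p * Complex.exp (2 * (π : ℂ) * I *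
          ((p.1 : ℂ) * τ + bilinC S (fun i => (p.2 i : ℂ)) (fun i => (lam i : ℂ) * τ + (mu i : ℂ))))‖ :=
        tsum_mul_left.symm
    _ ≤ _ := by
        refine Summable.tsum_le_tsum ?_ (hs1.mul_left _) (summable_sum fun ε _ => hg ε)
        intro p
        rw [hnorm]
        by_cases hfp : f p = 0
        · simp only [hfp, norm_zero, zero_mul, mul_zero]
          exact Finset.sum_nonneg fun ε _ => hg0 ε p
        obtain ⟨-, -, hsup⟩ := hφ.support p hfp
        have hsup' : (0 : ℝ) ≤ 2 * p.1 * t - bilinR S (fun i => (p.2 i : ℝ)) (fun i => (p.2 i : ℝ)) := by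
          rw [← bilinQ_cast]; exact_mod_cast hsup
        have hX : 0 ≤ p.1 + bilinR S (fun i => (p.2 i : ℝ)) lam + t / 2 * bilinR S lam lam := by
          have h1 := bilinR_self_nonneg hS (fun i => (p.2 i : ℝ) + t * lam i)
          rw [bilinR_expand hS] at h1
          have : 0 ≤ (2 * (t : ℝ)) * (p.1 + bilinR S (fun i => (p.2 i : ℝ)) lam + t / 2 * bilinR S lam lam) := by
            nlinarith
          exact nonneg_of_mul_nonneg_right this (by positivity)
        have hL := bilinR_self_nonneg hS lam
        -- the best vertex
        let ε : ι → Bool := fun j => decide (∑ i, (p.2 i : ℝ) * (S i j : ℝ) < 0)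
        have hε : bilinR S (fun i => (p.2 i : ℝ)) (vert ε) ≤ bilinR S (fun i => (p.2 i : ℝ)) lam := by
          unfold bilinR
          rw [Finset.sum_comm, Finset.sum_comm (f := fun i j => (p.2 i : ℝ) * (S i j : ℝ) * lam j)]
          refine Finset.sum_le_sum fun j _ => ?_
          rw [← Finset.sum_mul, ← Finset.sum_mul]
          by_cases hj : ∑ i, (p.2 i : ℝ) * (S i j : ℝ) < 0
          · have : vert ε j = 1 := by simp [vert, ε, hj]
            rw [this]
            nlinarith [(hlam j).2]
          · have : vert ε j = 0 := by simp [vert, ε, hj]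
            rw [this]
            push Not at hj
            nlinarith [(hlam j).1]
        refine le_trans ?_ (Finset.single_le_sum (f := fun ε => g ε p) (fun ε _ => hg0 ε p) (Finset.mem_univ ε))
        simp only [g]
        rw [mul_left_comm, ← Real.exp_add]
        gcongr
        have hpi := Real.pi_pos
        have e1 : (1 / 2 : ℝ) * (p.1 + bilinR S (fun i => (p.2 i : ℝ)) (vert ε))
            ≤ τ.im * (p.1 + bilinR S (fun i => (p.2 i : ℝ)) lam + t / 2 * bilinR S lam lam) := by
          calc _ ≤ (1 / 2 : ℝ) * (p.1 + bilinR S (fun i => (p.2 i : ℝ)) lam + t / 2 * bilinR S lam lam) := by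
                have : 0 ≤ (t : ℝ) / 2 * bilinR S lam lam := by positivity
                linarith
            _ ≤ _ := by gcongr
        nlinarith

/-- the same bound for all elliptic variables. -/
lemma jacobi_bound_all {S : Matrix ι ι ℤ} (hS : IsEvenPosDef S) {k t : ℚ} (ht : 0 < t)
    {χ : SL2Z → ℂ} {ν : (ι → ℤ) → (ι → ℤ) → ℂ} (hν : ∀ x y, HasFiniteOrder (ν x y))
    {f : ℚ × (ι → ℚ) → ℂ} {φ : ℂ → (ι → ℂ) → ℂ} (hφ : IsJacobiForm S k t χ ν f φ) :
    ∃ M : ℝ, 0 ≤ M ∧ ∀ τ : ℂ, 1 / 2 ≤ τ.im → ∀ lam mu : ι → ℝ,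
      Real.exp (-(π * t * τ.im * bilinR S lam lam))
        * ‖φ τ (fun i => (lam i : ℂ) * τ + (mu i : ℂ))‖ ≤ M := by
  obtain ⟨M, hM0, hM⟩ := jacobi_bound_cell hS ht hφ
  refine ⟨M, hM0, fun τ hτ lam mu => ?_⟩
  have hτ0 : 0 < τ.im := by linarith
  let fr : ι → ℝ := fun i => Int.fract (lam i)
  let x : ι → ℤ := fun i => ⌊lam i⌋
  have h := hM τ hτ fr mu (fun i => ⟨Int.fract_nonneg _, (Int.fract_lt_one _).le⟩)
  have he := hφ.elliptic x 0 τ hτ0 (fun i => (fr i : ℂ) * τ + (mu i : ℂ))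
  have hlam : (fun i => (lam i : ℂ) * τ + (mu i : ℂ))
      = fun i => (fr i : ℂ) * τ + (mu i : ℂ) + (x i : ℂ) * τ + (((0 : ι → ℤ) i : ℤ) : ℂ) := by
    funext i
    have : (lam i : ℂ) = (fr i : ℂ) + (x i : ℂ) := by
      have := Int.fract_add_floor (lam i)
      simp only [fr, x]
      exact_mod_cast this.symm
    rw [this]; simp; ring
  have hν1 : ‖ν x 0‖ = 1 := by
    obtain ⟨N, hN, h1⟩ := hν x 0
    have h2 := congrArg norm h1
    rw [norm_pow, norm_one] at h2
    exact (pow_eq_one_iff_of_nonneg (norm_nonneg _) hN.ne').mp h2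
  rw [hlam, he, norm_mul, norm_mul, hν1, one_mul, Complex.norm_exp, ← mul_assoc, ← Real.exp_add]
  refine le_trans (le_of_eq ?_) h
  congr 2
  have hre : (-((π : ℂ) * I * (t : ℂ)) * ((bilinZ S x x : ℂ) * τ
      + 2 * bilinC S (fun i => (x i : ℂ)) (fun i => (fr i : ℂ) * τ + (mu i : ℂ)))).re
      = π * t * (bilinR S (fun i => (x i : ℝ)) (fun i => (x i : ℝ)) * τ.im
        + 2 * (τ.im * bilinR S (fun i => (x i : ℝ)) fr)) := by
    have e1 : ∀ w : ℂ, (-((π : ℂ) * I * (t : ℂ)) * w).re = π * t * w.im := by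
      intro w
      have : (-((π : ℂ) * I * (t : ℂ)) * w) = ((π * t : ℝ) : ℂ) * (-(I * w)) := by push_cast; ring
      rw [this, Complex.re_ofReal_mul]; simp
    have e2 : ((bilinZ S x x : ℂ) * τ).im
        = bilinR S (fun i => (x i : ℝ)) (fun i => (x i : ℝ)) * τ.im := by
      rw [← bilinZ_cast]
      have : ((bilinZ S x x : ℂ) * τ) = ((bilinZ S x x : ℝ) : ℂ) * τ := by push_cast; ring
      rw [this, Complex.im_ofReal_mul]
    have e3 : (2 * bilinC S (fun i => (x i : ℂ)) (fun i => (fr i : ℂ) * τ + (mu i : ℂ))).im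
        = 2 * (τ.im * bilinR S (fun i => (x i : ℝ)) fr) := by
      have h2 : (fun i => ((fr i : ℂ) * τ + (mu i : ℂ)).im) = fun i => τ.im * fr i := by
        funext i
        simp [mul_comm]
      have h3 : ∀ w : ℂ, (2 * w).im = 2 * w.im := by intro w; simp
      rw [h3, bilinC_imZ, h2, bilinR_smul_right]
    rw [e1, Complex.add_im, e2, e3]
  rw [hre]
  have hl2 : lam = fun i => fr i + 1 * (x i : ℝ) := by
    funext i
    have := Int.fract_add_floor (lam i)
    simp only [fr, x]; linarith
  rw [hl2, bilinR_expand hS, bilinR_symm hS fr (fun i => (x i : ℝ))]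
  ring

/-- polynomial growth of a Jacobi form towards the real axis for real elliptic variable. -/
lemma jacobi_growth {S : Matrix ι ι ℤ} (hS : IsEvenPosDef S) {k : ℤ} {t : ℚ} (ht : 0 < t)
    {χ : SL2Z → ℂ} (hχ : ∀ A, ‖χ A‖ = 1)
    {ν : (ι → ℤ) → (ι → ℤ) → ℂ} (hν : ∀ x y, HasFiniteOrder (ν x y))
    {f : ℚ × (ι → ℚ) → ℂ} {φ : ℂ → (ι → ℂ) → ℂ} (hφ : IsJacobiForm S (k : ℚ) t χ ν f φ) :
    ∃ M : ℝ, 0 ≤ M ∧ ∀ τ : ℂ, 0 < τ.im → τ.im ≤ 1 → ∀ x : ι → ℝ,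
      ‖φ τ (fun i => (x i : ℂ))‖ ≤ M * (τ.im⁻¹) ^ k.natAbs := by
  obtain ⟨M, hM0, hM⟩ := jacobi_bound_all hS ht hν hφ
  refine ⟨M, hM0, fun τ hτ hτ1 x => ?_⟩
  obtain ⟨A, hA1, hA2⟩ := ModularGroup.exists_one_half_le_im_smul_and_norm_denom_le ⟨τ, hτ⟩
  have hA2' : ‖(A.1 1 0 : ℂ) * τ + (A.1 1 1 : ℂ)‖ ≤ 1 := by
    simpa [UpperHalfPlane.denom] using hA2
  have hne := mob_den_ne A hτ
  set j : ℂ := (A.1 1 0 : ℂ) * τ + (A.1 1 1 : ℂ) with hj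
  have him := mob_im A hτ
  rw [← hj] at him
  set τ' : ℂ := ((A.1 0 0 : ℂ) * τ + (A.1 0 1 : ℂ)) / j with hτ'
  have hA1' : 1 / 2 ≤ τ'.im := by
    have e : ((A • (⟨τ, hτ⟩ : UpperHalfPlane) : UpperHalfPlane) : ℂ) = τ' := by
      rw [UpperHalfPlane.specialLinearGroup_apply]
      simp [hτ', hj]
    have : UpperHalfPlane.im (A • (⟨τ, hτ⟩ : UpperHalfPlane)) = τ'.im := by
      rw [← e]; rfl
    rw [← this]; exact hA1
  have hmod := hφ.modular A τ hτ (fun i => (x i : ℂ))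
  rw [← hj, ← hτ'] at hmod
  have hdet := A.2
  rw [Matrix.det_fin_two] at hdet
  have hdet' : (A.1 0 0 : ℂ) * A.1 1 1 - A.1 0 1 * A.1 1 0 = 1 := by exact_mod_cast hdet
  let lam : ι → ℝ := fun i => (-(A.1 1 0 : ℝ)) * x i
  let mu : ι → ℝ := fun i => (A.1 0 0 : ℝ) * x i
  have hz : (fun i => (x i : ℂ) / j) = fun i => (lam i : ℂ) * τ' + (mu i : ℂ) := by
    funext i
    simp only [lam, mu, hτ']
    push_cast
    field_simp
    rw [hj]
    linear_combination (-(x i : ℂ)) * hdet'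
  have hb := hM τ' hA1' lam mu
  rw [← hz, hmod, norm_mul, norm_mul, norm_mul, hχ, one_mul, Complex.norm_exp] at hb
  have hcp : j ^ (((k : ℚ) : ℂ)) = j ^ k := by
    rw [← Complex.cpow_intCast]; simp
  rw [hcp] at hb
  have hxx : bilinR S lam lam = (A.1 1 0 : ℝ) ^ 2 * bilinR S x x := by
    simp only [lam]
    rw [bilinR_smul_left, bilinR_smul_right]; ring
  have hre : ((π : ℂ) * I * (t : ℂ) * (A.1 1 0 : ℂ) * bilinC S (fun i => (x i : ℂ)) (fun i => (x i : ℂ)) / j).re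
      = π * t * τ'.im * bilinR S lam lam := by
    rw [bilinC_ofReal, hxx, him]
    have : (π : ℂ) * I * (t : ℂ) * (A.1 1 0 : ℂ) * ((bilinR S x x : ℝ) : ℂ) / j
        = ((π * t * (A.1 1 0 : ℝ) * bilinR S x x : ℝ) : ℂ) * (I * j⁻¹) := by
      push_cast; field_simp
    rw [this, Complex.re_ofReal_mul, Complex.I_mul_re, Complex.inv_im, Complex.normSq_eq_norm_sq]
    have : j.im = (A.1 1 0 : ℝ) * τ.im := by simp [hj]
    rw [this]
    ring
  rw [hre] at hb
  have hb2 : ‖j ^ k‖ * ‖φ τ (fun i => (x i : ℂ))‖ ≤ M := by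
    refine le_trans (le_of_eq ?_) hb
    have : Real.exp (-(π * t * τ'.im * bilinR S lam lam)) * Real.exp (π * t * τ'.im * bilinR S lam lam) = 1 := by
      rw [← Real.exp_add]; simp
    linear_combination (-(‖j ^ k‖ * ‖φ τ (fun i => (x i : ℂ))‖)) * this
  -- lower bound of the automorphy factor
  have hjlow : τ.im ≤ ‖j‖ := by
    by_cases hc : A.1 1 0 = 0
    · have hd : j = (A.1 1 1 : ℂ) := by rw [hj, hc]; simp
      have hd0 : A.1 1 1 ≠ 0 := by
        intro h0; rw [hd, h0] at hne; simp at hne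
      have : (1 : ℝ) ≤ |(A.1 1 1 : ℝ)| := by exact_mod_cast Int.one_le_abs hd0
      rw [hd, Complex.norm_intCast]
      linarith
    · have h1 : |j.im| ≤ ‖j‖ := Complex.abs_im_le_norm j
      have h2 : j.im = (A.1 1 0 : ℝ) * τ.im := by simp [hj]
      have : (1 : ℝ) ≤ |(A.1 1 0 : ℝ)| := by exact_mod_cast Int.one_le_abs hc
      rw [h2, abs_mul, abs_of_pos hτ] at h1
      nlinarith
  have hjpow : τ.im ^ k.natAbs ≤ ‖j ^ k‖ := by
    rw [norm_zpow]
    rcases Int.natAbs_eq k with hk | hk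
    · conv_rhs => rw [hk]
      rw [zpow_natCast]
      gcongr
    · conv_rhs => rw [hk]
      rw [_root_.zpow_neg, zpow_natCast]
      have hp : 0 < ‖j‖ ^ k.natAbs := pow_pos (norm_pos_iff.mpr hne) _
      calc τ.im ^ k.natAbs ≤ 1 := pow_le_one₀ hτ.le hτ1
        _ ≤ _ := (one_le_inv₀ hp).mpr (pow_le_one₀ (norm_nonneg _) hA2')
  have hpos : 0 < τ.im ^ k.natAbs := pow_pos hτ _
  rw [inv_pow, ← div_eq_mul_inv, le_div_iff₀ hpos]
  calc _ ≤ ‖φ τ (fun i => (x i : ℂ))‖ * ‖j ^ k‖ := by gcongr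
    _ ≤ M := by rw [mul_comm]; exact hb2

lemma jacobi_coeff_bound {S : Matrix ι ι ℤ} (hS : IsEvenPosDef S) {k : ℤ} {t : ℚ} (ht : 0 < t)
    {χ : SL2Z → ℂ} (hχ : ∀ A, ‖χ A‖ = 1)
    {ν : (ι → ℤ) → (ι → ℤ) → ℂ} (hν : ∀ x y, HasFiniteOrder (ν x y))
    {f : ℚ × (ι → ℚ) → ℂ} {φ : ℂ → (ι → ℂ) → ℂ} (hφ : IsJacobiForm S (k : ℚ) t χ ν f φ) :
    ∃ C : ℝ, 0 ≤ C ∧ ∀ p : ℚ × (ι → ℚ), 0 ≤ p.1 → ‖f p‖ ≤ C * (1 + (p.1 : ℝ)) ^ k.natAbs := by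
  obtain ⟨M, hM0, hM⟩ := jacobi_growth hS ht hχ hν hφ
  refine ⟨M * Real.exp (2 * π), by positivity, fun p hp => ?_⟩
  have hp' : (0 : ℝ) ≤ p.1 := by exact_mod_cast hp
  have hv : (0 : ℝ) < (1 + (p.1 : ℝ))⁻¹ := by positivity
  have hv1 : (1 + (p.1 : ℝ))⁻¹ ≤ 1 := inv_le_one_of_one_le₀ (by linarith)
  have h := coeff_le hS f φ hφ.expansion (1 + (p.1 : ℝ))⁻¹ hv (M * (1 + (p.1 : ℝ)) ^ k.natAbs) (by
    intro u x
    have him : ((u : ℂ) + ((1 + (p.1 : ℝ))⁻¹ : ℝ) * I).im = (1 + (p.1 : ℝ))⁻¹ := by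
      rw [Complex.add_im, Complex.ofReal_im, Complex.im_ofReal_mul, Complex.I_im]; ring
    have := hM ((u : ℂ) + ((1 + (p.1 : ℝ))⁻¹ : ℝ) * I) (by rw [him]; exact hv) (by rw [him]; exact hv1) x
    rw [him, inv_inv] at this
    exact this) p
  have h2 : Real.exp (-(2 * π)) ≤ Real.exp (-(2 * π * (p.1 * (1 + (p.1 : ℝ))⁻¹))) := by
    apply Real.exp_le_exp.mpr
    have : (p.1 : ℝ) * (1 + (p.1 : ℝ))⁻¹ ≤ 1 := by
      rw [← div_eq_mul_inv, div_le_one (by linarith)]; linarith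
    nlinarith [Real.pi_pos]
  have h3 : ‖f p‖ * Real.exp (-(2 * π)) ≤ M * (1 + (p.1 : ℝ)) ^ k.natAbs :=
    le_trans (by gcongr) h
  rw [Real.exp_neg, ← div_eq_mul_inv, div_le_iff₀ (Real.exp_pos _)] at h3
  linarith

/-! ### Convergence -/

lemma tube_delta {S : Matrix ι ι ℤ} (hS : IsEvenPosDef S) {t : ℚ} (ht : 0 < t) {Q : ℕ} (hQ : 0 < Q)
    {p : ℂ × (ι → ℂ) × ℂ} (hp : p ∈ tubeDom S ((Q : ℚ) * t)) :
    ∃ δ : ℝ, 0 < δ ∧ ∀ (n d : ℝ) (l : ι → ℝ), 0 ≤ n → 0 ≤ d → bilinR S l l ≤ 2 * (n * d / Q) * t →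
      δ * (n + d) ≤ n * p.1.im / Q + bilinR S l (fun i => (p.2.1 i).im) + d * p.2.2.im / Q := by
  obtain ⟨hv, hw, hlt⟩ := hp
  set v := p.1.im
  set w := p.2.2.im
  set y : ι → ℝ := fun i => (p.2.1 i).im
  have hQr : (0 : ℝ) < Q := by exact_mod_cast hQ
  have htr : (0 : ℝ) < t := by exact_mod_cast ht
  push_cast at hlt
  have hY := bilinR_self_nonneg hS y
  set Y := bilinR S y y
  set s : ℝ := (2 * v * w - Q * t * Y) / (2 * (v + w)) with hs
  have hvw : 0 < 2 * (v + w) := by positivity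
  have hspos : 0 < s := div_pos (by linarith) hvw
  have hse : s * (2 * (v + w)) = 2 * v * w - Q * t * Y := by rw [hs]; field_simp
  have hQtY : 0 ≤ Q * t * Y := by positivity
  have hsv : 0 ≤ v - s := by
    by_contra hneg
    push Not at hneg
    nlinarith [mul_pos hv hw, mul_pos hv hv]
  have hsw : 0 ≤ w - s := by
    by_contra hneg
    push Not at hneg
    nlinarith [mul_pos hv hw, mul_pos hw hw]
  refine ⟨s / Q, by positivity, fun n d l hn hd hl => ?_⟩
  have hcs := bilinR_cs hS l y
  have hA : 0 ≤ n * (v - s) / Q := by positivity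
  have hB : 0 ≤ d * (w - s) / Q := by positivity
  have hle : Q * t * Y ≤ 2 * (v - s) * (w - s) := by nlinarith [sq_nonneg s]
  have h1 : bilinR S l y ^ 2 ≤ (n * (v - s) / Q + d * (w - s) / Q) ^ 2 := by
    calc bilinR S l y ^ 2 ≤ bilinR S l l * Y := hcs
      _ ≤ (2 * (n * d / Q) * t) * Y := by gcongr
      _ = (2 * (n * d) / Q ^ 2) * (Q * t * Y) := by field_simp
      _ ≤ (2 * (n * d) / Q ^ 2) * (2 * (v - s) * (w - s)) := by gcongr
      _ = 4 * (n * (v - s) / Q) * (d * (w - s) / Q) := by field_simp; ring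
      _ ≤ _ := by nlinarith [sq_nonneg (n * (v - s) / Q - d * (w - s) / Q)]
  have h2 := abs_le_of_sq_le_sq' h1 (by positivity)
  have h3 : s / Q * (n + d) = n * v / Q + d * w / Q - (n * (v - s) / Q + d * (w - s) / Q) := by
    field_simp; ring
  rw [h3]
  linarith [h2.1]

lemma summable_int_exp {c : ℝ} (hc : 0 < c) : Summable (fun n : ℤ => Real.exp (-(c * |(n : ℝ)|))) := by
  have h := Real.summable_pow_mul_exp_neg_nat_mul 0 hc
  refine Summable.of_nat_of_neg ?_ ?_
  · refine h.congr fun n => ?_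
    simp
  · refine h.congr fun n => ?_
    simp

lemma summable_pi_exp (ι : Type*) [Fintype ι] {c : ℝ} (hc : 0 < c) :
    Summable (fun h : ι → ℤ => ∏ i, Real.exp (-(c * |(h i : ℝ)|))) := by
  have h1 := summable_int_exp hc
  refine summable_of_sum_le (c := ∏ _i : ι, ∑' n : ℤ, Real.exp (-(c * |(n : ℝ)|)))
    (fun h => by positivity) fun u => ?_
  calc _ ≤ ∑ h ∈ Fintype.piFinset (fun i => (u.image (fun h : ι → ℤ => h i) : Finset ℤ)),
        ∏ i, Real.exp (-(c * |(h i : ℝ)|)) := by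
        refine Finset.sum_le_sum_of_subset_of_nonneg ?_ (fun _ _ _ => by positivity)
        intro h hh
        rw [Fintype.mem_piFinset]
        intro i
        exact Finset.mem_image_of_mem _ hh
    _ = ∏ i : ι, ∑ n ∈ (u.image (fun h : ι → ℤ => h i) : Finset ℤ), Real.exp (-(c * |(n : ℝ)|)) := by
        rw [Finset.prod_univ_sum]
    _ ≤ _ := by
        refine Finset.prod_le_prod (fun i _ => Finset.sum_nonneg fun _ _ => (Real.exp_pos _).le) ?_
        intro i _
        exact h1.sum_le_tsum _ (fun _ _ => (Real.exp_pos _).le)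

/-- coordinates of `2 S l`. -/
def dcoord (S : Matrix ι ι ℤ) (l : ι → ℚ) (j : ι) : ℚ := 2 * ∑ i, l i * (S i j : ℚ)

lemma dcoord_eq (S : Matrix ι ι ℤ) (l : ι → ℚ) (j : ι) :
    dcoord S l j = 2 * bilinQ S l (fun i => ((Pi.single j 1 : ι → ℤ) i : ℚ)) := by
  unfold dcoord bilinQ
  congr 1
  refine Finset.sum_congr rfl fun i _ => ?_
  rw [Finset.sum_eq_single j]
  · simp
  · intro b _ hb; simp [hb]
  · simp

lemma summable_dual {S : Matrix ι ι ℤ} (hS : IsEvenPosDef S) {c : ℝ} (hc : 0 < c) :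
    Summable (fun l : ι → ℚ =>
      if InHalfDual S l then ∏ i, Real.exp (-(c * |(dcoord S l i : ℝ)|)) else 0) := by
  have hinteg : ∀ l : {l : ι → ℚ // InHalfDual S l}, ∀ j, ∃ m : ℤ, dcoord S l.1 j = m := by
    intro l j
    obtain ⟨m, hm⟩ := l.2 (Pi.single j 1)
    exact ⟨m, by rw [dcoord_eq, hm]⟩
  choose e he using hinteg
  have hinj : Function.Injective e := by
    intro l l' h
    apply Subtype.ext
    have h3 := dual_inj hS (fun i => l.1 i - l'.1 i) (by
      intro j
      have h1 := he l j
      have h2 := he l' j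
      rw [h, ← h2] at h1
      unfold dcoord at h1
      simp_rw [sub_mul, Finset.sum_sub_distrib]
      linarith)
    funext i
    exact sub_eq_zero.mp (congrFun h3 i)
  have h1 := (summable_pi_exp ι hc).comp_injective hinj
  have h2 : Summable ((fun l : ι → ℚ => ∏ i, Real.exp (-(c * |(dcoord S l i : ℝ)|))) ∘
      ((↑) : {l : ι → ℚ | InHalfDual S l} → (ι → ℚ))) := by
    refine h1.congr fun l => ?_
    simp only [Function.comp]
    refine Finset.prod_congr rfl fun i _ => ?_
    rw [he l i]; simp
  rw [summable_subtype_iff_indicator] at h2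
  refine h2.congr fun l => ?_
  simp [Set.indicator]

lemma summable_pnat {c : ℝ} (hc : 0 < c) (K : ℕ) :
    Summable (fun n : ℕ+ => ((n : ℕ) : ℝ) ^ K * Real.exp (-(c * ((n : ℕ) : ℝ)))) := by
  have h := (Real.summable_pow_mul_exp_neg_nat_mul K hc).comp_injective PNat.coe_injective
  refine h.congr fun n => ?_
  simp

/-- The master family of terms. -/
def FT (S : Matrix ι ι ℤ) (f : ℚ × (ι → ℚ) → ℂ)
    (vη : SL2Z → ℂ) (σ : ℕ → SL2Z) (k : ℤ) (Q : ℕ) (μ : ℤ) (p : ℂ × (ι → ℂ) × ℂ)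
    (x : (ℕ+ × ℕ+) × (ℕ+ × (ι → ℚ))) : ℂ :=
  if (((x.1.1 : ℕ) * (x.1.2 : ℕ) : ℕ) : ℤ) ≡ μ [ZMOD (Q : ℤ)] then
    ((x.1.1 : ℕ) : ℂ) ^ (k - 1) * vη (σ x.1.1)
      * f ((((x.2.1 : ℕ) : ℚ) * ((x.1.2 : ℕ) : ℚ)) / (Q : ℚ), x.2.2)
      * Complex.exp (2 * (π : ℂ) * I * (((x.1.1 : ℕ) : ℂ) *
        (((x.2.1 : ℕ) : ℂ) * p.1 / Q + bilinC S (fun i => (x.2.2 i : ℂ)) p.2.1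
          + ((x.1.2 : ℕ) : ℂ) * p.2.2 / Q)))
  else 0

set_option maxHeartbeats 2000000 in
lemma FT_summable {S : Matrix ι ι ℤ} (hS : IsEvenPosDef S) {k : ℤ} {t : ℚ} (ht : 0 < t)
    {Q : ℕ} (hQ : 0 < Q)
    {vη : SL2Z → ℂ} (hχ : ∀ A, ‖vη A‖ = 1)
    {ν : (ι → ℤ) → (ι → ℤ) → ℂ} (hν : ∀ x y, HasFiniteOrder (ν x y))
    {f : ℚ × (ι → ℚ) → ℂ} {φ : ℂ → (ι → ℂ) → ℂ} (hφ : IsJacobiForm S (k : ℚ) t vη ν f φ)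
    (σ : ℕ → SL2Z) (μ : ℤ) {p : ℂ × (ι → ℂ) × ℂ} (hp : p ∈ tubeDom S ((Q : ℚ) * t)) :
    Summable (FT S f vη σ k Q μ p) := by
  obtain ⟨δ, hδ, hδ'⟩ := tube_delta hS ht hQ hp
  obtain ⟨C, hC0, hC⟩ := jacobi_coeff_bound hS ht hχ hν hφ
  have hQr : (0 : ℝ) < Q := by exact_mod_cast hQ
  have hQ1 : (1 : ℝ) ≤ Q := by exact_mod_cast hQ
  have htr : (0 : ℝ) < t := by exact_mod_cast ht
  have hpi := Real.pi_pos
  set K := k.natAbs with hK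
  set K1 := (k - 1).natAbs with hK1
  -- bound for coordinates
  obtain ⟨B, hB1, hB⟩ : ∃ B : ℝ, 1 ≤ B ∧ ∀ i, 8 * (t : ℝ) * |(S i i : ℝ)| ≤ B := by
    refine ⟨1 + ∑ i, 8 * (t : ℝ) * |(S i i : ℝ)|, ?_, fun i => ?_⟩
    · have : 0 ≤ ∑ i, 8 * (t : ℝ) * |(S i i : ℝ)| := Finset.sum_nonneg fun i _ => by positivity
      linarith
    · have := Finset.single_le_sum (f := fun i => 8 * (t : ℝ) * |(S i i : ℝ)|)
        (fun i _ => by positivity) (Finset.mem_univ i)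
      linarith
  set c : ℝ := 2 * π * δ / (2 + Fintype.card ι * B) with hc
  have hden : 0 < 2 + Fintype.card ι * B := by positivity
  have hcpos : 0 < c := by positivity
  have hcden : c * (2 + Fintype.card ι * B) = 2 * π * δ := by rw [hc]; field_simp
  have hn1 : ∀ K' : ℕ, (0 : ℕ+ → ℝ) ≤
      fun n : ℕ+ => ((n : ℕ) : ℝ) ^ K' * Real.exp (-(c * ((n : ℕ) : ℝ))) := by
    intro K' n
    change (0 : ℝ) ≤ ((n : ℕ) : ℝ) ^ K' * Real.exp (-(c * ((n : ℕ) : ℝ)))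
    positivity
  have hn2 : (0 : (ι → ℚ) → ℝ) ≤ fun l : ι → ℚ =>
      if InHalfDual S l then ∏ i, Real.exp (-(c * |(dcoord S l i : ℝ)|)) else 0 := by
    intro l
    change (0 : ℝ) ≤ if InHalfDual S l then ∏ i, Real.exp (-(c * |(dcoord S l i : ℝ)|)) else 0
    split_ifs <;> positivity
  have hsum := ((summable_pnat hcpos K1).mul_of_nonneg (summable_pnat hcpos K)
      (hn1 _) (hn1 _)).mul_of_nonneg
    ((summable_pnat hcpos K).mul_of_nonneg (summable_dual hS hcpos) (hn1 _) hn2)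
      (fun x => mul_nonneg (hn1 _ _) (hn1 _ _)) (fun x => mul_nonneg (hn1 _ _) (hn2 _))
  refine Summable.of_norm_bounded (hsum.mul_left (C * 2 ^ K)) ?_
  rintro ⟨⟨a, d⟩, ⟨n, l⟩⟩
  simp only [FT]
  have hrhs : 0 ≤ C * 2 ^ K * (((a : ℕ) : ℝ) ^ K1 * Real.exp (-(c * ((a : ℕ) : ℝ))) *
      (((d : ℕ) : ℝ) ^ K * Real.exp (-(c * ((d : ℕ) : ℝ)))) *
      (((n : ℕ) : ℝ) ^ K * Real.exp (-(c * ((n : ℕ) : ℝ))) *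
        if InHalfDual S l then ∏ i, Real.exp (-(c * |(dcoord S l i : ℝ)|)) else 0)) := by
    refine mul_nonneg (by positivity) (mul_nonneg (by positivity) (mul_nonneg (by positivity) ?_))
    split_ifs <;> positivity
  by_cases hcong : (((a : ℕ) * (d : ℕ) : ℕ) : ℤ) ≡ μ [ZMOD (Q : ℤ)]
  swap
  · rw [if_neg hcong, norm_zero]; exact hrhs
  rw [if_pos hcong]
  by_cases hf : f ((((n : ℕ) : ℚ) * ((d : ℕ) : ℚ)) / (Q : ℚ), l) = 0
  · rw [hf, mul_zero, zero_mul, norm_zero]; exact hrhs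
  obtain ⟨hs1, hs2, hs3⟩ := hφ.support _ hf
  simp only at hs1 hs2 hs3
  rw [if_pos hs2]
  have ha1 : (1 : ℝ) ≤ ((a : ℕ) : ℝ) := by exact_mod_cast a.2
  have hd1 : (1 : ℝ) ≤ ((d : ℕ) : ℝ) := by exact_mod_cast d.2
  have hn1 : (1 : ℝ) ≤ ((n : ℕ) : ℝ) := by exact_mod_cast n.2
  have hfb := hC ((((n : ℕ) : ℚ) * ((d : ℕ) : ℚ)) / (Q : ℚ), l) hs1
  simp only [norm_mul, hχ, mul_one, norm_exp_two_pi_I_mul]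
  set ar : ℝ := ((a : ℕ) : ℝ) with har
  set dr : ℝ := ((d : ℕ) : ℝ) with hdr
  set nr : ℝ := ((n : ℕ) : ℝ) with hnr
  have hll : bilinR S (fun i => (l i : ℝ)) (fun i => (l i : ℝ)) ≤ 2 * (nr * dr / Q) * t := by
    have : (0 : ℝ) ≤ ((2 * (((n : ℕ) : ℚ) * ((d : ℕ) : ℚ) / (Q : ℚ)) * t - bilinQ S l l : ℚ) : ℝ) := by
      exact_mod_cast hs3
    rw [Rat.cast_sub, bilinQ_cast] at this
    push_cast at this
    linarith
  have hX := hδ' nr dr (fun i => (l i : ℝ)) (by linarith) (by linarith) hll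
  -- coefficient bounds
  have b1 : ‖((a : ℕ) : ℂ) ^ (k - 1)‖ ≤ ar ^ K1 := by
    rw [norm_zpow, Complex.norm_natCast, ← har]
    calc ar ^ (k - 1) ≤ ar ^ ((K1 : ℕ) : ℤ) := zpow_le_zpow_right₀ ha1 (by omega)
      _ = _ := by rw [zpow_natCast]
  have b2 : ‖f ((((n : ℕ) : ℚ) * ((d : ℕ) : ℚ)) / (Q : ℚ), l)‖ ≤ C * 2 ^ K * (dr ^ K * nr ^ K) := by
    refine hfb.trans ?_
    have : (1 : ℝ) + ((((n : ℕ) : ℚ) * ((d : ℕ) : ℚ) / (Q : ℚ) : ℚ) : ℝ) ≤ 2 * (dr * nr) := by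
      push_cast
      rw [← hnr, ← hdr]
      have e1 : nr * dr / Q ≤ nr * dr := div_le_self (by positivity) hQ1
      have e2 : 1 ≤ dr * nr := one_le_mul_of_one_le_of_one_le hd1 hn1
      linarith
    calc _ ≤ C * (2 * (dr * nr)) ^ K := by
          gcongr
      _ = _ := by rw [mul_pow, mul_pow]; ring
  -- exponential bound
  have hcoord : ∀ i, |(dcoord S l i : ℝ)| ≤ B * (nr + dr) := by
    intro i
    have hcs := bilinR_cs hS (fun i => (l i : ℝ)) (fun j => ((Pi.single i 1 : ι → ℤ) j : ℝ))
    have e1 : (dcoord S l i : ℝ) = 2 * bilinR S (fun i => (l i : ℝ)) (fun j => ((Pi.single i 1 : ι → ℤ) j : ℝ)) := by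
      rw [dcoord_eq]; push_cast; rw [bilinQ_cast]; try simp
    have e2 : bilinR S (fun j => ((Pi.single i 1 : ι → ℤ) j : ℝ)) (fun j => ((Pi.single i 1 : ι → ℤ) j : ℝ))
        = S i i := by
      unfold bilinR
      rw [Finset.sum_eq_single i, Finset.sum_eq_single i]
      · simp
      · intro b _ hb; simp [hb]
      · simp
      · intro b _ hb; simp [hb]
      · simp
    rw [e2] at hcs
    have hl0 := bilinR_self_nonneg hS (fun i => (l i : ℝ))
    apply abs_le_of_sq_le_sq _ (by positivity)
    rw [e1]
    calc _ = 4 * (bilinR S (fun i => (l i : ℝ)) (fun j => ((Pi.single i 1 : ι → ℤ) j : ℝ))) ^ 2 := by ring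
      _ ≤ 4 * (bilinR S (fun i => (l i : ℝ)) (fun i => (l i : ℝ)) * |(S i i : ℝ)|) := by
          gcongr
          exact hcs.trans (by gcongr; exact le_abs_self _)
      _ ≤ 4 * ((2 * (nr * dr / Q) * t) * |(S i i : ℝ)|) := by gcongr
      _ = (8 * (t : ℝ) * |(S i i : ℝ)|) * (nr * dr / Q) := by ring
      _ ≤ B * (nr * dr) := by
          gcongr
          · exact hB i
          · exact div_le_self (by positivity) hQ1
      _ ≤ (B * B) * ((nr + dr) * (nr + dr)) := by
          gcongr
          · nlinarith
          · linarith
          · linarith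
      _ = _ := by ring
  have hsumc : ∑ i, |(dcoord S l i : ℝ)| ≤ Fintype.card ι * B * (nr + dr) := by
    refine (Finset.sum_le_sum fun i _ => hcoord i).trans ?_
    simp [mul_assoc]
  have b3 : Real.exp (-(2 * π * (((a : ℕ) : ℂ) *
        (((n : ℕ) : ℂ) * p.1 / Q + bilinC S (fun i => (l i : ℂ)) p.2.1
          + ((d : ℕ) : ℂ) * p.2.2 / Q)).im))
      ≤ Real.exp (-(c * ar)) * Real.exp (-(c * dr)) * (Real.exp (-(c * nr)) *
        ∏ i, Real.exp (-(c * |(dcoord S l i : ℝ)|))) := by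
    rw [← Real.exp_sum, ← Real.exp_add, ← Real.exp_add, ← Real.exp_add]
    apply Real.exp_le_exp.mpr
    have him : (((a : ℕ) : ℂ) *
        (((n : ℕ) : ℂ) * p.1 / Q + bilinC S (fun i => (l i : ℂ)) p.2.1
          + ((d : ℕ) : ℂ) * p.2.2 / Q)).im
        = ar * (nr * p.1.im / Q + bilinR S (fun i => (l i : ℝ)) (fun i => (p.2.1 i).im) + dr * p.2.2.im / Q) := by
      rw [← bilinC_imQ]
      have h1 : ∀ (x : ℕ) (w : ℂ), ((x : ℂ) * w).im = (x : ℝ) * w.im := by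
        intro x w; rw [← Complex.ofReal_natCast, Complex.im_ofReal_mul]
      have h2 : ∀ (x : ℕ) (w : ℂ), ((x : ℂ) * w / Q).im = (x : ℝ) * w.im / Q := by
        intro x w; rw [← Complex.ofReal_natCast Q, Complex.div_ofReal_im, h1]
      rw [h1, Complex.add_im, Complex.add_im, h2, h2]
    rw [him, Finset.sum_neg_distrib, ← Finset.mul_sum]
    have e1 : ar + dr + nr + ∑ i, |(dcoord S l i : ℝ)| ≤ (2 + Fintype.card ι * B) * (ar * (nr + dr)) := by
      have q1 : ar ≤ ar * (nr + dr) := by nlinarith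
      have q2 : nr + dr ≤ ar * (nr + dr) := by nlinarith
      have q3 : Fintype.card ι * B * (nr + dr) ≤ Fintype.card ι * B * (ar * (nr + dr)) := by gcongr
      nlinarith
    have e2 : c * (ar + dr + nr + ∑ i, |(dcoord S l i : ℝ)|) ≤ 2 * π * (ar * (δ * (nr + dr))) := by
      calc _ ≤ c * ((2 + Fintype.card ι * B) * (ar * (nr + dr))) := by gcongr
        _ = (c * (2 + Fintype.card ι * B)) * (ar * (nr + dr)) := by ring
        _ = _ := by rw [hcden]; ring
    have e3 : 2 * π * (ar * (δ * (nr + dr))) ≤ 2 * π * (ar * (nr * p.1.im / Q + bilinR S (fun i => (l i : ℝ)) (fun i => (p.2.1 i).im) + dr * p.2.2.im / Q)) := by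
      gcongr
    linarith
  calc _ ≤ ar ^ K1 * (C * 2 ^ K * (dr ^ K * nr ^ K)) * (Real.exp (-(c * ar)) * Real.exp (-(c * dr)) * (Real.exp (-(c * nr)) *
        ∏ i, Real.exp (-(c * |(dcoord S l i : ℝ)|)))) := by
        gcongr
    _ = _ := by ring

/-! ### Hecke sums -/

lemma hasSum_of_eq {α : Type*} {g h : α → ℂ} {s : ℂ} (H : HasSum g s) (e : ∀ x, h x = g x) :
    HasSum h s := by
  rw [show h = g from funext e]; exact H

lemma hecke_inner {S : Matrix ι ι ℤ} {k : ℤ} {t : ℚ} {Q : ℕ} (hQ : 2 ≤ Q)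
    {vη : SL2Z → ℂ} {ν : (ι → ℤ) → (ι → ℤ) → ℂ}
    {f : ℚ × (ι → ℚ) → ℂ} {φ : ℂ → (ι → ℂ) → ℂ} (hφ : IsJacobiForm S (k : ℚ) t vη ν f φ)
    (hgrid : ∀ p, f p ≠ 0 → ∃ n' : ℤ, p.1 = (n' : ℚ) / (Q : ℚ) ∧ n' ≡ 1 [ZMOD (Q : ℤ)])
    (a d : ℕ+) {τ : ℂ} (hτ : 0 < τ.im) (z : ι → ℂ) :
    HasSum (fun x : ℕ+ × (ι → ℚ) =>
      f ((((x.1 : ℕ) : ℚ) * ((d : ℕ) : ℚ)) / (Q : ℚ), x.2)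
        * Complex.exp (2 * (π : ℂ) * I * (((a : ℕ) : ℂ) *
          (((x.1 : ℕ) : ℂ) * τ / Q + bilinC S (fun i => (x.2 i : ℂ)) z))))
      (((d : ℕ) : ℂ)⁻¹ * ∑ b ∈ Finset.range d,
        φ ((((a : ℕ) : ℂ) * τ + (b : ℂ) * (Q : ℂ)) / ((d : ℕ) : ℂ)) (fun i => ((a : ℕ) : ℂ) * z i)) := by
  have hd0 : ((d : ℕ) : ℂ) ≠ 0 := by exact_mod_cast d.ne_zero
  have hQ0 : (Q : ℂ) ≠ 0 := by exact_mod_cast (by omega : Q ≠ 0)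
  have hQq : (Q : ℚ) ≠ 0 := by exact_mod_cast (by omega : Q ≠ 0)
  have hdq : ((d : ℕ) : ℚ) ≠ 0 := by exact_mod_cast d.ne_zero
  have him : ∀ b : ℕ, 0 < ((((a : ℕ) : ℂ) * τ + (b : ℂ) * (Q : ℂ)) / ((d : ℕ) : ℂ)).im := by
    intro b
    rw [← Complex.ofReal_natCast (d : ℕ), Complex.div_ofReal_im]
    have : (((a : ℕ) : ℂ) * τ + (b : ℂ) * (Q : ℂ)).im = ((a : ℕ) : ℝ) * τ.im := by
      simp
    rw [this]
    have ha : (0 : ℝ) < ((a : ℕ) : ℝ) := by exact_mod_cast a.pos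
    have hd : (0 : ℝ) < ((d : ℕ) : ℝ) := by exact_mod_cast d.pos
    positivity
  have h1 := (hasSum_sum (s := Finset.range d) (fun b _ =>
    hφ.expansion _ (him b) (fun i => ((a : ℕ) : ℂ) * z i))).mul_left (((d : ℕ) : ℂ)⁻¹)
  set e : ℕ+ × (ι → ℚ) → ℚ × (ι → ℚ) :=
    fun x => ((((x.1 : ℕ) : ℚ) * ((d : ℕ) : ℚ)) / (Q : ℚ), x.2) with he
  have hinj : Function.Injective e := by
    rintro ⟨n, l⟩ ⟨n', l'⟩ h
    simp only [he, Prod.mk.injEq] at h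
    obtain ⟨h, rfl⟩ := h
    have : ((n : ℕ) : ℚ) = ((n' : ℕ) : ℚ) := by
      field_simp at h
      exact h
    have : n = n' := by exact_mod_cast this
    rw [this]
  rw [← Function.Injective.hasSum_iff hinj] at h1
  · refine hasSum_of_eq h1 ?_
    rintro ⟨n, l⟩
    simp only [Function.comp, he]
    have : ∀ b ∈ Finset.range (d : ℕ), f ((((n : ℕ) : ℚ) * ((d : ℕ) : ℚ)) / (Q : ℚ), l) *
        Complex.exp (2 * (π : ℂ) * I * ((((((n : ℕ) : ℚ) * ((d : ℕ) : ℚ)) / (Q : ℚ) : ℚ) : ℂ)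
          * ((((a : ℕ) : ℂ) * τ + (b : ℂ) * (Q : ℂ)) / ((d : ℕ) : ℂ))
          + bilinC S (fun i => (l i : ℂ)) (fun i => ((a : ℕ) : ℂ) * z i)))
        = f ((((n : ℕ) : ℚ) * ((d : ℕ) : ℚ)) / (Q : ℚ), l)
        * Complex.exp (2 * (π : ℂ) * I * (((a : ℕ) : ℂ) *
          (((n : ℕ) : ℂ) * τ / Q + bilinC S (fun i => (l i : ℂ)) z))) := by
      intro b _
      congr 1
      rw [Complex.exp_eq_exp_iff_exists_int]
      refine ⟨n * b, ?_⟩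
      rw [bilinC_smul_right]
      push_cast
      field_simp
      ring
    rw [Finset.sum_congr rfl this, Finset.sum_const, Finset.card_range, nsmul_eq_mul]
    field_simp
  · rintro ⟨r, l⟩ hr
    simp only
    by_cases hf : f (r, l) = 0
    · simp [hf]
    obtain ⟨n', hn', hmod⟩ := hgrid _ hf
    obtain ⟨hs1, -, -⟩ := hφ.support _ hf
    simp only at hn' hs1
    have hQpos : (0 : ℚ) < Q := by exact_mod_cast (by omega : 0 < Q)
    have hn0 : 0 ≤ n' := by
      rw [hn'] at hs1
      have := mul_nonneg hs1 hQpos.le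
      rw [div_mul_cancel₀ _ hQq] at this
      exact_mod_cast this
    have hn1 : 1 ≤ n' := by
      rcases hn0.lt_or_eq with h | h
      · omega
      · rw [← h] at hmod
        have := Int.emod_emod_of_dvd 1 (dvd_refl (Q : ℤ))
        unfold Int.ModEq at hmod
        rw [Int.zero_emod, Int.emod_eq_of_lt (by norm_num) (by omega)] at hmod
        omega
    have hndvd : ¬ ((d : ℕ) : ℤ) ∣ n' := by
      rintro ⟨c, hc⟩
      apply hr
      have hdp : (0 : ℤ) < ((d : ℕ) : ℤ) := by exact_mod_cast d.pos
      have hcp : 0 < c := by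
        by_contra h
        push Not at h
        nlinarith
      refine ⟨(⟨c.toNat, by omega⟩, l), ?_⟩
      simp only [he, hn', hc, PNat.mk_coe]
      have : ((c.toNat : ℕ) : ℚ) = (c : ℚ) := by
        have : ((c.toNat : ℤ)) = c := Int.toNat_of_nonneg hcp.le
        exact_mod_cast congrArg (fun x : ℤ => (x : ℚ)) this
      rw [this]
      push_cast
      rw [mul_comm]
    set ζ : ℂ := Complex.exp (2 * (π : ℂ) * I * ((n' : ℂ) / ((d : ℕ) : ℂ))) with hζ
    have hζd : ζ ^ (d : ℕ) = 1 := by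
      rw [hζ, ← Complex.exp_nat_mul, Complex.exp_eq_one_iff]
      refine ⟨n', ?_⟩
      field_simp
    have hζ1 : ζ ≠ 1 := by
      intro h
      rw [hζ, Complex.exp_eq_one_iff] at h
      obtain ⟨c, hc⟩ := h
      apply hndvd
      refine ⟨c, ?_⟩
      have h2 : (2 * (π : ℂ) * I) ≠ 0 := Complex.two_pi_I_ne_zero
      have h3 : (n' : ℂ) / ((d : ℕ) : ℂ) = c := by
        apply mul_left_cancel₀ h2
        rw [hc]; ring
      rw [div_eq_iff hd0] at h3
      have : n' = c * ((d : ℕ) : ℤ) := by exact_mod_cast h3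
      rw [this, mul_comm]
    have hgeom : ∑ b ∈ Finset.range (d : ℕ), ζ ^ b = 0 := by
      rw [geom_sum_eq hζ1, hζd, sub_self, zero_div]
    have : ∀ b ∈ Finset.range (d : ℕ), f (r, l) *
        Complex.exp (2 * (π : ℂ) * I * ((r : ℂ)
          * ((((a : ℕ) : ℂ) * τ + (b : ℂ) * (Q : ℂ)) / ((d : ℕ) : ℂ))
          + bilinC S (fun i => (l i : ℂ)) (fun i => ((a : ℕ) : ℂ) * z i)))
        = f (r, l) * Complex.exp (2 * (π : ℂ) * I * ((r : ℂ)
          * ((((a : ℕ) : ℂ) * τ) / ((d : ℕ) : ℂ))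
          + bilinC S (fun i => (l i : ℂ)) (fun i => ((a : ℕ) : ℂ) * z i))) * ζ ^ b := by
      intro b _
      rw [hζ, ← Complex.exp_nat_mul, mul_assoc (f (r, l)), ← Complex.exp_add, hn']
      congr 2
      push_cast
      field_simp
      ring
    rw [Finset.sum_congr rfl this, ← Finset.mul_sum, hgeom]
    simp

lemma lift_hasSum {S : Matrix ι ι ℤ} {k : ℤ} {t : ℚ} {Q : ℕ} (hQ : 2 ≤ Q)
    {vη : SL2Z → ℂ} {ν : (ι → ℤ) → (ι → ℤ) → ℂ}
    {f : ℚ × (ι → ℚ) → ℂ} {φ : ℂ → (ι → ℂ) → ℂ} (hφ : IsJacobiForm S (k : ℚ) t vη ν f φ)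
    (hgrid : ∀ p, f p ≠ 0 → ∃ n' : ℤ, p.1 = (n' : ℚ) / (Q : ℚ) ∧ n' ≡ 1 [ZMOD (Q : ℤ)])
    (σ : ℕ → SL2Z) (μ : ℤ) {p : ℂ × (ι → ℂ) × ℂ} (hp : 0 < p.1.im) {T : ℂ}
    (hT : HasSum (FT S f vη σ k Q μ p) T) :
    HasSum (fun m : ℕ => liftTerm φ vη σ k Q μ m p) T := by
  set G : ℕ → ℕ → ℂ := fun a d => if ((a * d : ℕ) : ℤ) ≡ μ [ZMOD (Q : ℤ)] then
      ((a * d : ℕ) : ℂ)⁻¹ * (∑ b ∈ Finset.range d, (a : ℂ) ^ k * vη (σ a) *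
        φ (((a : ℂ) * p.1 + (b : ℂ) * (Q : ℂ)) / (d : ℂ)) (fun i => (a : ℂ) * p.2.1 i))
        * Complex.exp (2 * (π : ℂ) * I * (((a * d : ℕ) : ℂ) / (Q : ℂ)) * p.2.2) else 0 with hG
  have h1 : HasSum (fun x : ℕ+ × ℕ+ => G x.1 x.2) T := by
    refine HasSum.prod_fiberwise hT ?_
    rintro ⟨a, d⟩
    simp only [hG, FT]
    by_cases hc : (((a : ℕ) * (d : ℕ) : ℕ) : ℤ) ≡ μ [ZMOD (Q : ℤ)]
    swap
    · simp only [if_neg hc]; exact hasSum_zero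
    simp only [if_pos hc]
    have ha0 : ((a : ℕ) : ℂ) ≠ 0 := by exact_mod_cast a.ne_zero
    have hd0 : ((d : ℕ) : ℂ) ≠ 0 := by exact_mod_cast d.ne_zero
    have h := ((hecke_inner hQ hφ hgrid a d hp p.2.1).mul_left
      (((a : ℕ) : ℂ) ^ (k - 1) * vη (σ a))).mul_right
      (Complex.exp (2 * (π : ℂ) * I * ((((a : ℕ) * (d : ℕ) : ℕ) : ℂ) / (Q : ℂ)) * p.2.2))
    have hval : (((a : ℕ) * (d : ℕ) : ℕ) : ℂ)⁻¹ * (∑ b ∈ Finset.range (d : ℕ),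
        ((a : ℕ) : ℂ) ^ k * vη (σ a) *
        φ ((((a : ℕ) : ℂ) * p.1 + (b : ℂ) * (Q : ℂ)) / ((d : ℕ) : ℂ))
          (fun i => ((a : ℕ) : ℂ) * p.2.1 i))
        = (((a : ℕ) : ℂ) ^ (k - 1) * vη (σ a)) * (((d : ℕ) : ℂ)⁻¹ * ∑ b ∈ Finset.range d,
        φ ((((a : ℕ) : ℂ) * p.1 + (b : ℂ) * (Q : ℂ)) / ((d : ℕ) : ℂ))
          (fun i => ((a : ℕ) : ℂ) * p.2.1 i)) := by
      rw [← Finset.mul_sum, zpow_sub_one₀ ha0]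
      push_cast
      rw [mul_inv]
      ring
    rw [hval]
    refine hasSum_of_eq h ?_
    rintro ⟨n, l⟩
    simp only [mul_assoc]
    rw [← Complex.exp_add]
    congr 4
    push_cast
    ring_nf
  set H : ℕ × ℕ → ℂ := fun x => if x.2 ∈ x.1.divisors then G x.2 (x.1 / x.2) else 0 with hH
  set e : ℕ+ × ℕ+ → ℕ × ℕ := fun x => ((x.1 : ℕ) * (x.2 : ℕ), (x.1 : ℕ)) with he
  have hinj : Function.Injective e := by
    rintro ⟨a, d⟩ ⟨a', d'⟩ h
    simp only [he, Prod.mk.injEq] at h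
    obtain ⟨h1, h2⟩ := h
    have : a = a' := PNat.coe_injective h2
    subst this
    have : d = d' := PNat.coe_injective (Nat.eq_of_mul_eq_mul_left a.pos h1)
    rw [this]
  have h2 : HasSum H T := by
    rw [← Function.Injective.hasSum_iff hinj]
    · refine hasSum_of_eq h1 ?_
      rintro ⟨a, d⟩
      simp only [Function.comp, he, hH]
      rw [if_pos (by simp), Nat.mul_div_cancel_left _ a.pos]
    · rintro ⟨m, a⟩ hx
      simp only [hH]
      rw [if_neg]
      intro hm
      rw [Nat.mem_divisors] at hm
      obtain ⟨⟨d, rfl⟩, h0⟩ := hm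
      have ha : 0 < a := Nat.pos_of_ne_zero (by rintro rfl; simp at h0)
      have hd : 0 < d := Nat.pos_of_ne_zero (by rintro rfl; simp at h0)
      exact hx ⟨(⟨a, ha⟩, ⟨d, hd⟩), rfl⟩
  refine HasSum.prod_fiberwise h2 fun m => ?_
  have h3 : liftTerm φ vη σ k Q μ m p = ∑ a ∈ m.divisors, H (m, a) := by
    have : ∀ a ∈ m.divisors, H (m, a) = if ((m : ℕ) : ℤ) ≡ μ [ZMOD (Q : ℤ)] then
      (m : ℂ)⁻¹ * (∑ b ∈ Finset.range (m / a), (a : ℂ) ^ k * vη (σ a) *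
        φ (((a : ℂ) * p.1 + (b : ℂ) * (Q : ℂ)) / ((m / a : ℕ) : ℂ)) (fun i => (a : ℂ) * p.2.1 i))
        * Complex.exp (2 * (π : ℂ) * I * ((m : ℂ) / (Q : ℂ)) * p.2.2) else 0 := by
      intro a ha
      simp only [hH]
      rw [if_pos ha]
      simp only [hG]
      rw [Nat.mul_div_cancel' (Nat.dvd_of_mem_divisors ha)]
    rw [Finset.sum_congr rfl this]
    unfold liftTerm heckeSum
    by_cases hm : 1 ≤ m
    · by_cases hc : ((m : ℕ) : ℤ) ≡ μ [ZMOD (Q : ℤ)]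
      · simp only [hm, hc, and_self, if_true]
        rw [← Finset.sum_mul, ← Finset.mul_sum]
      · simp [hc]
    · have : m = 0 := by omega
      subst this
      simp
  rw [h3]
  apply hasSum_sum_of_ne_finset_zero
  intro a ha
  simp only [hH]
  rw [if_neg ha]

lemma zmod_inv_self {Q : ℕ} (hQ : Q ∈ ({2, 3, 4, 6, 12} : Finset ℕ)) :
    ∀ x y : ZMod Q, x * y = 1 → x = y := by
  simp only [Finset.mem_insert, Finset.mem_singleton] at hQ
  rcases hQ with rfl | rfl | rfl | rfl | rfl <;> decide

lemma coeff_hasSum {S : Matrix ι ι ℤ} {k : ℤ} {t : ℚ} {Q : ℕ}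
    (hQ : Q ∈ ({2, 3, 4, 6, 12} : Finset ℕ))
    {vη : SL2Z → ℂ} {ν : (ι → ℤ) → (ι → ℤ) → ℂ}
    {f : ℚ × (ι → ℚ) → ℂ} {φ : ℂ → (ι → ℂ) → ℂ} (hφ : IsJacobiForm S (k : ℚ) t vη ν f φ)
    (hgrid : ∀ p, f p ≠ 0 → ∃ n' : ℤ, p.1 = (n' : ℚ) / (Q : ℚ) ∧ n' ≡ 1 [ZMOD (Q : ℤ)])
    (σ : ℕ → SL2Z) (μ : ℤ) {p : ℂ × (ι → ℂ) × ℂ} {T : ℂ}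
    (hT : HasSum (FT S f vη σ k Q μ p) T) :
    HasSum (fun q : ℤ × (ι → ℚ) × ℤ =>
          liftCoeff S f vη σ k Q μ q *
            Complex.exp (2 * (π : ℂ) * I *
              ((q.1 : ℂ) * p.1 / (Q : ℂ)
                + bilinC S (fun i => (q.2.1 i : ℂ)) p.2.1
                + (q.2.2 : ℂ) * p.2.2 / (Q : ℂ)))) T := by
  have hQ0 : Q ≠ 0 := by rintro rfl; simp at hQ
  have hQq : (Q : ℚ) ≠ 0 := by exact_mod_cast hQ0
  have hQc : (Q : ℂ) ≠ 0 := by exact_mod_cast hQ0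
  set W : (ℤ × (ι → ℚ) × ℤ) → ℕ → ℂ := fun q a =>
      if InHalfDual S (fun i => q.2.1 i / (a : ℚ)) then
        (a : ℂ) ^ (k - 1) * vη (σ a)
          * f (((q.1 * q.2.2 : ℤ) : ℚ) / ((a : ℚ) ^ 2 * (Q : ℚ)), fun i => q.2.1 i / (a : ℚ))
      else 0 with hW
  set E : (ℤ × (ι → ℚ) × ℤ) → ℂ := fun q => Complex.exp (2 * (π : ℂ) * I *
              ((q.1 : ℂ) * p.1 / (Q : ℂ)
                + bilinC S (fun i => (q.2.1 i : ℂ)) p.2.1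
                + (q.2.2 : ℂ) * p.2.2 / (Q : ℂ))) with hE
  set K : (ℤ × (ι → ℚ) × ℤ) × ℕ → ℂ := fun x =>
    if (1 ≤ x.1.1 ∧ 1 ≤ x.1.2.2 ∧ x.1.1 ≡ μ [ZMOD (Q : ℤ)] ∧ x.1.2.2 ≡ μ [ZMOD (Q : ℤ)]) ∧
      x.2 ∈ (Int.gcd x.1.1 x.1.2.2).divisors then W x.1 x.2 * E x.1 else 0 with hK
  set e : (ℕ+ × ℕ+) × (ℕ+ × (ι → ℚ)) → (ℤ × (ι → ℚ) × ℤ) × ℕ := fun x =>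
    (((((x.1.1 : ℕ) * (x.2.1 : ℕ) : ℕ) : ℤ), (fun i => ((x.1.1 : ℕ) : ℚ) * x.2.2 i),
      (((x.1.1 : ℕ) * (x.1.2 : ℕ) : ℕ) : ℤ)), (x.1.1 : ℕ)) with he
  have hinj : Function.Injective e := by
    rintro ⟨⟨a, d⟩, ⟨n, l⟩⟩ ⟨⟨a', d'⟩, ⟨n', l'⟩⟩ h
    simp only [he, Prod.mk.injEq] at h
    obtain ⟨⟨h1, h2, h3⟩, h4⟩ := h
    have : a = a' := PNat.coe_injective h4
    subst this
    have e1 : n = n' := PNat.coe_injective (Nat.eq_of_mul_eq_mul_left a.pos (by exact_mod_cast h1))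
    have e2 : d = d' := PNat.coe_injective (Nat.eq_of_mul_eq_mul_left a.pos (by exact_mod_cast h3))
    have e3 : l = l' := by
      funext i
      have ha0 : ((a : ℕ) : ℚ) ≠ 0 := by exact_mod_cast a.ne_zero
      exact mul_left_cancel₀ ha0 (congrFun h2 i)
    rw [e1, e2, e3]
  have h2 : HasSum K T := by
    rw [← Function.Injective.hasSum_iff hinj]
    · refine hasSum_of_eq hT ?_
      rintro ⟨⟨a, d⟩, ⟨n, l⟩⟩
      have ha0 : ((a : ℕ) : ℚ) ≠ 0 := by exact_mod_cast a.ne_zero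
      simp only [Function.comp, he, hK, FT]
      have hl : (fun i => ((a : ℕ) : ℚ) * l i / ((a : ℕ) : ℚ)) = l := by
        funext i; field_simp
      have hn : (((((a : ℕ) * (n : ℕ) : ℕ) : ℤ) * (((a : ℕ) * (d : ℕ) : ℕ) : ℤ) : ℤ) : ℚ)
          / (((a : ℕ) : ℚ) ^ 2 * (Q : ℚ)) = (((n : ℕ) : ℚ) * ((d : ℕ) : ℚ)) / (Q : ℚ) := by
        push_cast
        field_simp
      simp only [hW, hE, hl, hn]
      by_cases hf : f ((((n : ℕ) : ℚ) * ((d : ℕ) : ℚ)) / (Q : ℚ), l) = 0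
      · simp [hf]
      have hs := (hφ.support _ hf).2.1
      obtain ⟨n', hn', hmod⟩ := hgrid _ hf
      simp only at hs hn'
      have hnd : n' = ((n : ℕ) : ℤ) * ((d : ℕ) : ℤ) := by
        field_simp at hn'
        exact_mod_cast hn'.symm
      have hz : ((n : ℕ) : ZMod Q) = ((d : ℕ) : ZMod Q) := by
        apply zmod_inv_self hQ
        have := (ZMod.intCast_eq_intCast_iff _ _ _).mpr hmod
        rw [hnd] at this
        push_cast at this
        exact this
      have hnd' : (((a : ℕ) * (n : ℕ) : ℕ) : ℤ) ≡ (((a : ℕ) * (d : ℕ) : ℕ) : ℤ) [ZMOD (Q : ℤ)] := by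
        rw [← ZMod.intCast_eq_intCast_iff]
        push_cast
        rw [hz]
      by_cases hc : (((a : ℕ) * (d : ℕ) : ℕ) : ℤ) ≡ μ [ZMOD (Q : ℤ)]
      · rw [if_pos hc, if_pos hs, if_pos]
        · congr 2
          have : (fun i => ((((a : ℕ) : ℚ) * l i : ℚ) : ℂ)) = fun i => ((a : ℕ) : ℂ) * (l i : ℂ) := by
            funext i; push_cast; rfl
          rw [this, bilinC_smul_left]
          push_cast
          ring
        · refine ⟨⟨?_, ?_, hnd'.trans hc, hc⟩, ?_⟩
          · exact_mod_cast Nat.mul_pos a.pos n.pos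
          · exact_mod_cast Nat.mul_pos a.pos d.pos
          · rw [Int.gcd_natCast_natCast, Nat.mem_divisors]
            refine ⟨Nat.dvd_gcd (dvd_mul_right _ _) (dvd_mul_right _ _), ?_⟩
            exact (Nat.gcd_pos_of_pos_left _ (Nat.mul_pos a.pos n.pos)).ne'
      · rw [if_neg hc, if_neg]
        rintro ⟨⟨-, -, -, h⟩, -⟩
        exact hc h
    · rintro ⟨⟨N, l, M⟩, a⟩ hx
      simp only [hK]
      rw [if_neg]
      rintro ⟨⟨h1, h2, -, -⟩, hm⟩
      have ha : 0 < a := Nat.pos_of_mem_divisors hm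
      have hg := Nat.dvd_of_mem_divisors hm
      have hgN : (a : ℤ) ∣ N := (Int.natCast_dvd_natCast.mpr hg).trans (Int.gcd_dvd_left _ _)
      have hgM : (a : ℤ) ∣ M := (Int.natCast_dvd_natCast.mpr hg).trans (Int.gcd_dvd_right _ _)
      obtain ⟨n, rfl⟩ := hgN
      obtain ⟨d, rfl⟩ := hgM
      have haz : (0 : ℤ) < a := by exact_mod_cast ha
      have hn : 0 < n := by
        by_contra hneg
        push Not at hneg
        nlinarith
      have hd : 0 < d := by
        by_contra hneg
        push Not at hneg
        nlinarith
      have haq : (a : ℚ) ≠ 0 := by exact_mod_cast ha.ne'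
      apply hx
      refine ⟨((⟨a, ha⟩, ⟨d.toNat, by omega⟩), (⟨n.toNat, by omega⟩, fun i => l i / a)), ?_⟩
      simp only [he, PNat.mk_coe, Prod.mk.injEq, and_true]
      refine ⟨?_, ?_, ?_⟩
      · push_cast; rw [Int.toNat_of_nonneg hn.le]
      · funext i; field_simp
      · push_cast; rw [Int.toNat_of_nonneg hd.le]
  refine HasSum.prod_fiberwise h2 fun q => ?_
  have h3 : liftCoeff S f vη σ k Q μ q * E q = ∑ a ∈ (Int.gcd q.1 q.2.2).divisors, K (q, a) := by
    unfold liftCoeff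
    by_cases hc : 1 ≤ q.1 ∧ 1 ≤ q.2.2 ∧ q.1 ≡ μ [ZMOD (Q : ℤ)] ∧ q.2.2 ≡ μ [ZMOD (Q : ℤ)]
    · rw [if_pos hc, Finset.sum_mul]
      refine Finset.sum_congr rfl fun a ha => ?_
      have hcond : (1 ≤ q.1 ∧ 1 ≤ q.2.2 ∧ q.1 ≡ μ [ZMOD (Q : ℤ)] ∧ q.2.2 ≡ μ [ZMOD (Q : ℤ)]) ∧
          a ∈ (Int.gcd q.1 q.2.2).divisors := ⟨hc, ha⟩
      have hKq : K (q, a) = W q a * E q := if_pos hcond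
      rw [hKq]
    · rw [if_neg hc, zero_mul]
      symm
      refine Finset.sum_eq_zero fun a _ => ?_
      simp only [hK]
      rw [if_neg (fun h => hc h.1)]
  change HasSum _ (liftCoeff S f vη σ k Q μ q * E q)
  rw [h3]
  apply hasSum_sum_of_ne_finset_zero
  intro a ha
  simp only [hK]
  rw [if_neg (fun h => ha h.2)]

lemma coeff_support {S : Matrix ι ι ℤ} {k : ℤ} {t : ℚ} {Q : ℕ}
    {vη : SL2Z → ℂ} {ν : (ι → ℤ) → (ι → ℤ) → ℂ}
    {f : ℚ × (ι → ℚ) → ℂ} {φ : ℂ → (ι → ℂ) → ℂ} (hφ : IsJacobiForm S (k : ℚ) t vη ν f φ)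
    (σ : ℕ → SL2Z) (μ : ℤ) (q : ℤ × (ι → ℚ) × ℤ) (h : liftCoeff S f vη σ k Q μ q ≠ 0) :
    0 ≤ 2 * (q.1 : ℚ) * (q.2.2 : ℚ) * t / (Q : ℚ) - bilinQ S q.2.1 q.2.1 := by
  unfold liftCoeff at h
  split_ifs at h with hc
  swap
  · exact absurd rfl h
  obtain ⟨a, ha, hne⟩ := Finset.exists_ne_zero_of_sum_ne_zero h
  split_ifs at hne with hd
  swap
  · exact absurd rfl hne
  have hf := right_ne_zero_of_mul hne
  have hs := (hφ.support _ hf).2.2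
  simp only at hs
  rw [bilinQ_smul_smul] at hs
  have hapos : (0 : ℚ) < a := by exact_mod_cast Nat.pos_of_mem_divisors ha
  have h2 := mul_nonneg (sq_nonneg (a : ℚ)) hs
  have h3 : (a : ℚ) ^ 2 * (2 * (((q.1 * q.2.2 : ℤ) : ℚ) / ((a : ℚ) ^ 2 * (Q : ℚ))) * t
      - bilinQ S q.2.1 q.2.1 / (a : ℚ) ^ 2)
      = 2 * (q.1 : ℚ) * (q.2.2 : ℚ) * t / (Q : ℚ) - bilinQ S q.2.1 q.2.1 := by
    push_cast
    rw [mul_sub, mul_div_cancel₀ _ (by positivity), ← div_div]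
    field_simp
  rw [h3] at h2
  exact h2

lemma coeff_symm (S : Matrix ι ι ℤ) (k : ℤ) (Q : ℕ)
    (vη : SL2Z → ℂ) (f : ℚ × (ι → ℚ) → ℂ)
    (σ : ℕ → SL2Z) (μ : ℤ) (q : ℤ × (ι → ℚ) × ℤ) :
    liftCoeff S f vη σ k Q μ (q.2.2, q.2.1, q.1) = liftCoeff S f vη σ k Q μ q := by
  unfold liftCoeff
  simp only
  rw [Int.gcd_comm q.2.2 q.1, mul_comm q.2.2 q.1]
  congr 1
  apply propext
  tauto

lemma tube_symm {S : Matrix ι ι ℤ} {N : ℚ} {p : ℂ × (ι → ℂ) × ℂ} (hp : p ∈ tubeDom S N) :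
    (p.2.2, p.2.1, p.1) ∈ tubeDom S N := by
  obtain ⟨h1, h2, h3⟩ := hp
  refine ⟨h2, h1, ?_⟩
  simp only
  linarith [mul_right_comm (2 : ℝ) p.1.im p.2.2.im]

end aux

/-- On `H(L(Qt))` the lifting `Lift_μ(φ)` is the sum of its Fourier–Jacobi
series and has the stated Fourier expansion, whose coefficients are supported on indices of
nonnegative hyperbolic norm; in particular `Lift_μ(φ)` is symmetric in `τ` and `ω`. -/
theorem statement9 {ι : Type*} [Fintype ι] (S : Matrix ι ι ℤ) (hS : IsEvenPosDef S)
    (k : ℤ) (t : ℚ) (ht : 0 < t)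
    (D : ℕ) (hD2 : Even D) (hD24 : D ∣ 24) (hDpos : 0 < D) (hDlt : D < 24)
    (Q : ℕ) (hQ : Q = 24 / D)
    (vη : SL2Z → ℂ)
    (hvη : ∀ A : SL2Z, ∀ τ : ℂ, 0 < τ.im →
      dedekindEta (((A.1 0 0 : ℂ) * τ + (A.1 0 1 : ℂ))
            / ((A.1 1 0 : ℂ) * τ + (A.1 1 1 : ℂ))) ^ D
        = vη A * ((A.1 1 0 : ℂ) * τ + (A.1 1 1 : ℂ)) ^ (D / 2) * dedekindEta τ ^ D)
    (ν : (ι → ℤ) → (ι → ℤ) → ℂ) (hν : ∀ x y, HasFiniteOrder (ν x y))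
    (hνtriv : Odd Q → ∀ x y, ν x y = 1)
    (f : ℚ × (ι → ℚ) → ℂ) (φ : ℂ → (ι → ℂ) → ℂ)
    (hφ : IsJacobiForm S (k : ℚ) t vη ν f φ)
    -- the Fourier exponents of `φ` lie on the grid `ñ/Q`, `ñ ≡ 1 (mod Q)`:
    (hgrid : ∀ p, f p ≠ 0 → ∃ n' : ℤ, p.1 = (n' : ℚ) / (Q : ℚ) ∧ n' ≡ 1 [ZMOD (Q : ℤ)])
    (μ : ℤ) (hμ : IsCoprime μ (Q : ℤ))
    (σ : ℕ → SL2Z) (hσ : ∀ a : ℕ, 0 < a → Nat.Coprime a Q → SigmaCond Q a (σ a)) :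
    (∀ p ∈ tubeDom S ((Q : ℚ) * t),
      HasSum (fun m : ℕ => liftTerm φ vη σ k Q μ m p) (liftFun φ vη σ k Q μ p) ∧
      HasSum (fun q : ℤ × (ι → ℚ) × ℤ =>
          liftCoeff S f vη σ k Q μ q *
            Complex.exp (2 * (π : ℂ) * I *
              ((q.1 : ℂ) * p.1 / (Q : ℂ)
                + bilinC S (fun i => (q.2.1 i : ℂ)) p.2.1
                + (q.2.2 : ℂ) * p.2.2 / (Q : ℂ))))
        (liftFun φ vη σ k Q μ p)) ∧
    (∀ q : ℤ × (ι → ℚ) × ℤ, liftCoeff S f vη σ k Q μ q ≠ 0 →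
      0 ≤ 2 * (q.1 : ℚ) * (q.2.2 : ℚ) * t / (Q : ℚ) - bilinQ S q.2.1 q.2.1) ∧
    (∀ p ∈ tubeDom S ((Q : ℚ) * t),
      liftFun φ vη σ k Q μ (p.2.2, p.2.1, p.1) = liftFun φ vη σ k Q μ p) := by
  have hQmem : Q ∈ ({2, 3, 4, 6, 12} : Finset ℕ) := by
    subst hQ
    interval_cases D <;> first | decide | (exfalso; revert hD2; decide) | (exfalso; revert hD24; decide)
  have hQ2 : 2 ≤ Q := by
    simp only [Finset.mem_insert, Finset.mem_singleton] at hQmem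
    omega
  have hχ := norm_vη_eq_one D vη hvη
  have hmain : ∀ p ∈ tubeDom S ((Q : ℚ) * t),
      HasSum (fun m : ℕ => liftTerm φ vη σ k Q μ m p) (liftFun φ vη σ k Q μ p) ∧
      HasSum (fun q : ℤ × (ι → ℚ) × ℤ =>
          liftCoeff S f vη σ k Q μ q *
            Complex.exp (2 * (π : ℂ) * I *
              ((q.1 : ℂ) * p.1 / (Q : ℂ)
                + bilinC S (fun i => (q.2.1 i : ℂ)) p.2.1
                + (q.2.2 : ℂ) * p.2.2 / (Q : ℂ))))
        (liftFun φ vη σ k Q μ p) := by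
    intro p hp
    have hT := (FT_summable hS ht (by omega) hχ hν hφ σ μ hp).hasSum
    have h1 := lift_hasSum hQ2 hφ hgrid σ μ hp.1 hT
    have h2 : liftFun φ vη σ k Q μ p = _ := h1.tsum_eq
    rw [h2]
    exact ⟨h1, coeff_hasSum hQmem hφ hgrid σ μ hT⟩
  refine ⟨hmain, coeff_support hφ σ μ, fun p hp => ?_⟩
  have h1 := (hmain p hp).2
  have h2 := (hmain _ (tube_symm hp)).2
  set sw : (ℤ × (ι → ℚ) × ℤ) ≃ (ℤ × (ι → ℚ) × ℤ) :=
    ⟨fun q => (q.2.2, q.2.1, q.1), fun q => (q.2.2, q.2.1, q.1), fun _ => rfl, fun _ => rfl⟩ with hsw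
  rw [← sw.hasSum_iff] at h2
  refine h2.unique (hasSum_of_eq h1 ?_)
  intro q
  simp only [Function.comp, hsw, Equiv.coe_fn_mk]
  rw [coeff_symm]
  congr 3
  ring
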